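/- arXiv:2203.01258 — 3 statements merged into one kernel-verified Lean document; each statement's English description precedes it below -/
import Mathlib

section
/- The codimension three Gorenstein sequences of order two (i.e., with T_2 < 6, equivalently T_2 ∈ {4,5}) are exactly, besides those with Sperner number at most six: T = (1,3,4,5,…,s−1,s^k,s−1,…,3,1), T = (1,3,5,6,…,s−1,s^k,s−1,…,3,1), and T = (1,3,5,7,…,2t+1,2t+2,2t+3,…,s^k,…,3,1), where s ≥ 7 and k ≥ 1. -/
/- Common background: standard graded Artinian (Gorenstein) quotients of a
polynomial ring, their graded pieces, Hilbert function, socle degree,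
Lefschetz-type conditions, and Macaulay contraction duality. -/

noncomputable section
open MvPolynomial
open scoped Classical

variable {K : Type*} [Field K] {n : ℕ}

/-- The degree-`i` graded component of `R/I`: the image in the quotient of the
homogeneous polynomials of degree `i`. -/
def gradedPiece (I : Ideal (MvPolynomial (Fin n) K)) (i : ℕ) :
    Submodule K (MvPolynomial (Fin n) K ⧸ I) :=
  (homogeneousSubmodule (Fin n) K i).map (Ideal.Quotient.mkₐ K I).toLinearMap

/-- The Hilbert function of `R/I`. -/
def hilbFn (I : Ideal (MvPolynomial (Fin n) K)) (i : ℕ) : ℕ :=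
  Module.finrank K (gradedPiece I i)

/-- `I` is a homogeneous ideal. -/
def IsHomogIdeal (I : Ideal (MvPolynomial (Fin n) K)) : Prop :=
  ∀ p ∈ I, ∀ i, homogeneousComponent i p ∈ I

/-- The socle of `R/I`: elements killed by every variable. -/
def socleSub (I : Ideal (MvPolynomial (Fin n) K)) :
    Submodule K (MvPolynomial (Fin n) K ⧸ I) :=
  ⨅ v : Fin n, LinearMap.ker (LinearMap.mulLeft K (Ideal.Quotient.mk I (X v)))

/-- `R/I` is a standard graded Artinian Gorenstein algebra. -/
def IsAG (I : Ideal (MvPolynomial (Fin n) K)) : Prop :=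
  IsHomogIdeal I ∧ I ≠ ⊤ ∧ FiniteDimensional K (MvPolynomial (Fin n) K ⧸ I) ∧
    Module.finrank K (socleSub I) = 1

/-- The socle degree: the top degree with nonzero component. -/
def socDeg (I : Ideal (MvPolynomial (Fin n) K)) : ℕ :=
  sSup {i | hilbFn I i ≠ 0}

/-- Multiplication by `ℓ ^ d` maps `A_u` bijectively onto `A_v`. -/
def PowMulBij (I : Ideal (MvPolynomial (Fin n) K)) (ℓ : MvPolynomial (Fin n) K ⧸ I)
    (d u v : ℕ) : Prop :=
  (∀ a ∈ gradedPiece I u, ℓ ^ d * a = 0 → a = 0) ∧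
  (∀ b ∈ gradedPiece I v, ∃ a ∈ gradedPiece I u, ℓ ^ d * a = b)

/-- `(A, ℓ)` is a strong Lefschetz pair: `ℓ^(j-2i) : A_i → A_(j-i)` is bijective
for all `0 ≤ i ≤ ⌊j/2⌋`, `j` the socle degree. -/
def SLPair (I : Ideal (MvPolynomial (Fin n) K)) (ℓ : MvPolynomial (Fin n) K ⧸ I) : Prop :=
  ∀ i, 2 * i ≤ socDeg I → PowMulBij I ℓ (socDeg I - 2 * i) i (socDeg I - i)

/-- `A = R/I` has the strong Lefschetz property. -/
def StrongLefschetz (I : Ideal (MvPolynomial (Fin n) K)) : Prop :=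
  ∃ ℓ ∈ gradedPiece I 1, SLPair I ℓ

/-- Contraction of `F` by the monomial `x^d`. -/
def contractMon (d : Fin n →₀ ℕ) (F : MvPolynomial (Fin n) K) : MvPolynomial (Fin n) K :=
  ∑ e ∈ F.support, if d ≤ e then monomial (e - d) (coeff e F) else 0

/-- Contraction action of a polynomial `p` on `F` (Macaulay duality pairing). -/
def contract (p F : MvPolynomial (Fin n) K) : MvPolynomial (Fin n) K :=
  ∑ d ∈ p.support, coeff d p • contractMon d F

/-- The symmetric sequence of socle degree `j` built from the first-half difference
list `δ`: `T i = δ_0 + ⋯ + δ_{min(i, j-i)}` for `i ≤ j`, and `0` beyond. -/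
def symSeq (δ : List ℕ) (j : ℕ) : ℕ → ℕ :=
  fun i => if i ≤ j then (δ.take (min i (j - i) + 1)).sum else 0

/-- The sequence `(1,3,4,5,…,s-1,s^k,s-1,…,4,3,1)` (difference vector `(1,2,1^{s-3})`). -/
def famA (s k : ℕ) : ℕ → ℕ := symSeq ([1, 2] ++ List.replicate (s - 3) 1) (k + 2 * s - 5)

/-- The sequence `(1,3,5,6,…,s-1,s^k,s-1,…,6,5,3,1)` (difference vector `(1,2,2,1^{s-5})`). -/
def famB (s k : ℕ) : ℕ → ℕ := symSeq ([1, 2, 2] ++ List.replicate (s - 5) 1) (k + 2 * s - 7)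

/-- The sequence `(1,3,5,7,…,2t+1,2t+2,…,s^k,…,3,1)` (difference vector
`(1,2^t,1^{s-2t-1})`). -/
def famC (t s k : ℕ) : ℕ → ℕ :=
  symSeq ([1] ++ List.replicate t 2 ++ List.replicate (s - 2 * t - 1) 1)
    (k + 2 * s - 2 * t - 3)

/-
By Macaulay duality a Gorenstein algebra `A` is `R ⧸ Ann φ` for a homogeneous functional `φ`; the
pairing `(p, q) ↦ φ (p * q)` makes its Hilbert function symmetric. If `dim A_1 = 3` and
`dim A_2 ≤ 5`, the products of linear forms satisfy a quadratic relation; as the relation is nonzero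
at some point `p`, the linear forms `a`, `b` vanishing at `p` already give `A_2 = (a, b) A_1`. Then
`A_(i+2) = a A_(i+1) + b A_(i+1)`, where the two summands share at least `a b A_i`. Since
`a A ≅ A ⧸ (0 : a)` is Gorenstein of socle degree one less, hence symmetric too, this estimate in
the degrees `i` and `j - 2 - i` makes the Hilbert function of `A` concave. A concave symmetric
sequence starting with `1, 3` has first-half differences `1, 2, …, 2, 1, …, 1, 0, …, 0`.

Conversely, those differences are realized by the dual form `X^t Z^(j-t) + Y^(j-r) Z^r`: in the
degrees up to `j / 2` the quotient has as basis the monomials dividing one of its two terms.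
-/

section LinearAlgebra

theorem finrank_map_eq_of_ker_eq {R V W W' : Type*} [Ring R] [AddCommGroup V] [Module R V]
    [AddCommGroup W] [Module R W] [AddCommGroup W'] [Module R W'] (M : Submodule R V)
    {f : V →ₗ[R] W} {g : V →ₗ[R] W'} (h : LinearMap.ker f = LinearMap.ker g) :
    Module.finrank R (M.map f) = Module.finrank R (M.map g) := by
  rw [← LinearMap.range_domRestrict, ← LinearMap.range_domRestrict]
  have e : LinearMap.ker (f.domRestrict M) = LinearMap.ker (g.domRestrict M) := by
    rw [LinearMap.ker_domRestrict, LinearMap.ker_domRestrict, h]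
  exact ((f.domRestrict M).quotKerEquivRange.symm ≪≫ₗ Submodule.quotEquivOfEq _ _ e ≪≫ₗ
    (g.domRestrict M).quotKerEquivRange).finrank_eq

variable {F V W : Type*} [DivisionRing F] [AddCommGroup V] [Module F V] [AddCommGroup W]
  [Module F W]

theorem finrank_map_add_finrank_inf_ker (M : Submodule F V) [FiniteDimensional F M]
    (f : V →ₗ[F] W) :
    Module.finrank F (M.map f) + Module.finrank F (M ⊓ LinearMap.ker f : Submodule F V) =
      Module.finrank F M := by
  rw [← LinearMap.finrank_range_add_finrank_ker (f.domRestrict M), LinearMap.range_domRestrict,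
    LinearMap.ker_domRestrict, ← Submodule.finrank_map_subtype_eq M, Submodule.map_comap_subtype]

theorem finrank_add_finrank_le_of_le_sup {M N : Submodule F V} {T U : Submodule F W}
    [FiniteDimensional F M] [FiniteDimensional F U] {f : V →ₗ[F] W}
    (hNM : N ≤ M) (hNU : N.map f ≤ U) (hT : T ≤ U ⊔ M.map f) :
    Module.finrank F T + Module.finrank F N ≤ Module.finrank F M + Module.finrank F U := by
  have : FiniteDimensional F N := Submodule.finiteDimensional_of_le hNM
  have hT' := Submodule.finrank_mono hT
  have hsup := Submodule.finrank_sup_add_finrank_inf_eq U (M.map f)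
  have hinf : Module.finrank F (N.map f) ≤ Module.finrank F (U ⊓ M.map f : Submodule F W) :=
    Submodule.finrank_mono (le_inf hNU (Submodule.map_mono hNM))
  have hker : Module.finrank F (N ⊓ LinearMap.ker f : Submodule F V) ≤
      Module.finrank F (M ⊓ LinearMap.ker f : Submodule F V) :=
    Submodule.finrank_mono (inf_le_inf_right _ hNM)
  have hM := finrank_map_add_finrank_inf_ker M f
  have hN := finrank_map_add_finrank_inf_ker N f
  omega

theorem exists_dual_injOn_of_finrank_eq_one {V : Type*} [AddCommGroup V] [Module K V]
    {U : Submodule K V} (hU : Module.finrank K U = 1) :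
    ∃ f : Module.Dual K V, ∀ a ∈ U, f a = 0 → a = 0 := by
  have : FiniteDimensional K U := Module.finite_of_finrank_eq_succ hU
  let g := LinearEquiv.ofFinrankEq U K (hU.trans (Module.finrank_self K).symm)
  obtain ⟨f, hf⟩ := LinearMap.exists_extend g.toLinearMap
  refine ⟨f, fun a ha h0 => ?_⟩
  have hga : g ⟨a, ha⟩ = 0 := (LinearMap.congr_fun hf ⟨a, ha⟩).symm.trans h0
  exact congrArg Subtype.val (g.map_eq_zero_iff.1 hga)

end LinearAlgebra

section GradedPiece

variable {I : Ideal (MvPolynomial (Fin n) K)} {i j : ℕ}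

theorem mk_mem_gradedPiece {p : MvPolynomial (Fin n) K} (hp : p.IsHomogeneous i) :
    Ideal.Quotient.mk I p ∈ gradedPiece I i :=
  ⟨p, hp, rfl⟩

theorem mem_gradedPiece_iff {a : MvPolynomial (Fin n) K ⧸ I} :
    a ∈ gradedPiece I i ↔ ∃ p : MvPolynomial (Fin n) K, p.IsHomogeneous i ∧
      Ideal.Quotient.mk I p = a :=
  Iff.rfl

theorem gradedPiece_mul (I : Ideal (MvPolynomial (Fin n) K)) (i j : ℕ) :
    gradedPiece I i * gradedPiece I j = gradedPiece I (i + j) := by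
  rw [gradedPiece, gradedPiece, gradedPiece, ← homogeneousSubmodule_one_pow _ (i + j), pow_add,
    homogeneousSubmodule_one_pow, homogeneousSubmodule_one_pow, Submodule.map_mul]

theorem gradedPiece_zero (I : Ideal (MvPolynomial (Fin n) K)) :
    gradedPiece I 0 = Submodule.span K {1} := by
  rw [gradedPiece, homogeneousSubmodule_zero, Submodule.one_eq_span, Submodule.map_span,
    Set.image_singleton, AlgHom.toLinearMap_apply, map_one]

theorem mul_mem_gradedPiece {a b : MvPolynomial (Fin n) K ⧸ I} (ha : a ∈ gradedPiece I i)
    (hb : b ∈ gradedPiece I j) : a * b ∈ gradedPiece I (i + j) :=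
  gradedPiece_mul I i j ▸ Submodule.mul_mem_mul ha hb

theorem hilbFn_zero (hI : I ≠ ⊤) : hilbFn I 0 = 1 := by
  have : Nontrivial (MvPolynomial (Fin n) K ⧸ I) := Ideal.Quotient.nontrivial_iff.2 hI
  rw [hilbFn, gradedPiece_zero, finrank_span_singleton one_ne_zero]

instance finiteDimensional_gradedPiece (I : Ideal (MvPolynomial (Fin n) K)) (i : ℕ) :
    FiniteDimensional K (gradedPiece I i) :=
  Module.Finite.iff_fg.2 ((homogeneousSubmodule_fg _ _ i).map _)

theorem gradedPiece_eq_bot_iff : gradedPiece I i = ⊥ ↔ hilbFn I i = 0 :=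
  Submodule.finrank_eq_zero.symm

theorem iSup_gradedPiece (I : Ideal (MvPolynomial (Fin n) K)) : ⨆ i, gradedPiece I i = ⊤ := by
  refine eq_top_iff.2 fun a _ => ?_
  obtain ⟨p, rfl⟩ := Ideal.Quotient.mk_surjective a
  rw [← sum_homogeneousComponent p, map_sum]
  exact sum_mem fun i _ => Submodule.mem_iSup_of_mem i
    (mk_mem_gradedPiece (homogeneousComponent_isHomogeneous i p))

theorem finiteDimensional_quotient (h : ∀ i, j < i → gradedPiece I i = ⊥) :
    FiniteDimensional K (MvPolynomial (Fin n) K ⧸ I) := by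
  have htop : ⨆ i : Fin (j + 1), gradedPiece I i = ⊤ := by
    refine eq_top_iff.2 ((iSup_gradedPiece I).ge.trans (iSup_le fun i => ?_))
    by_cases hij : i ≤ j
    · exact le_iSup_of_le (⟨i, by omega⟩ : Fin (j + 1)) le_rfl
    · simp only [h i (by omega), bot_le]
  exact Module.finite_def.2 (htop ▸ Module.Finite.iff_fg.1 (Submodule.finite_iSup _))

theorem mk_homogeneousComponent_of_mk_eq (hI : IsHomogIdeal I) {p q : MvPolynomial (Fin n) K}
    (hp : p.IsHomogeneous i) (h : Ideal.Quotient.mk I q = Ideal.Quotient.mk I p) :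
    Ideal.Quotient.mk I (homogeneousComponent i q) = Ideal.Quotient.mk I p := by
  have hmem := hI _ (Ideal.Quotient.eq.1 h) i
  rw [map_sub, homogeneousComponent_of_mem hp, if_pos rfl] at hmem
  exact Ideal.Quotient.eq.2 hmem

theorem iSupIndep_gradedPiece (hI : IsHomogIdeal I) : iSupIndep (gradedPiece I) := by
  refine fun i => Submodule.disjoint_def.2 ?_
  rintro _ ⟨p, hp, rfl⟩ h
  have hle : ⨆ k, ⨆ (_ : k ≠ i), gradedPiece I k ≤
      (LinearMap.ker (homogeneousComponent i)).map (Ideal.Quotient.mkₐ K I).toLinearMap :=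
    iSup₂_le fun k hk => Submodule.map_mono fun q hq => by
      rw [LinearMap.mem_ker, homogeneousComponent_of_mem hq, if_neg hk.symm]
  obtain ⟨q, hq, hqp⟩ := hle h
  have hp0 := mk_homogeneousComponent_of_mk_eq hI hp hqp
  rw [LinearMap.mem_ker.1 hq, map_zero] at hp0
  exact hp0.symm

theorem exists_gradedPiece_ne_bot_and_eq_bot (hI : IsHomogIdeal I) (hI' : I ≠ ⊤)
    [FiniteDimensional K (MvPolynomial (Fin n) K ⧸ I)] :
    ∃ j, gradedPiece I j ≠ ⊥ ∧ ∀ i, j < i → gradedPiece I i = ⊥ := by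
  have hfin := WellFoundedGT.finite_ne_bot_of_iSupIndep (iSupIndep_gradedPiece hI)
  obtain ⟨j, hj, hmax⟩ := hfin.exists_maximal ⟨0, fun h => by
    simp [gradedPiece_eq_bot_iff, hilbFn_zero hI'] at h⟩
  exact ⟨j, hj, fun i hi => by_contra fun h => hi.not_ge (hmax h hi.le)⟩

theorem gradedPiece_eq_span_of_monomial_mem {I : Ideal (MvPolynomial (Fin n) K)}
    {D : Finset (Fin n →₀ ℕ)} (hD : ∀ e ∈ D, e.degree = i)
    (h : ∀ e : Fin n →₀ ℕ, e.degree = i → e ∉ D → monomial e 1 ∈ I) :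
    gradedPiece I i =
      Submodule.span K (Set.range fun e : D => Ideal.Quotient.mk I (monomial e 1)) := by
  refine le_antisymm ?_ (Submodule.span_le.2 ?_)
  · rintro _ ⟨p, hp, rfl⟩
    rw [AlgHom.toLinearMap_apply, p.as_sum, map_sum]
    refine sum_mem fun e he => ?_
    rw [← mul_one (coeff e p), ← smul_eq_mul, ← smul_monomial, map_smul]
    refine Submodule.smul_mem _ _ ?_
    by_cases heD : e ∈ D
    · exact Submodule.subset_span ⟨⟨e, heD⟩, rfl⟩
    · have hdeg : e.degree = i := by
        by_contra hne
        exact mem_support_iff.1 he (hp.coeff_eq_zero hne)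
      rw [Ideal.Quotient.mkₐ_eq_mk, Ideal.Quotient.eq_zero_iff_mem.2 (h e hdeg heD)]
      exact zero_mem _
  · rintro _ ⟨e, rfl⟩
    exact mk_mem_gradedPiece (isHomogeneous_monomial 1 (hD e e.2))

theorem mem_socleSub_iff {a : MvPolynomial (Fin n) K ⧸ I} :
    a ∈ socleSub I ↔ ∀ v, Ideal.Quotient.mk I (X v) * a = 0 := by
  simp only [socleSub, Submodule.mem_iInf, LinearMap.mem_ker, LinearMap.mulLeft_apply]

theorem gradedPiece_le_socleSub (h : gradedPiece I (j + 1) = ⊥) : gradedPiece I j ≤ socleSub I := by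
  refine fun a ha => mem_socleSub_iff.2 fun v => ?_
  have := mul_mem_gradedPiece (mk_mem_gradedPiece (I := I) (isHomogeneous_X K v)) ha
  rwa [add_comm, h, Submodule.mem_bot] at this

theorem exists_gradedPiece_eq_socleSub (hI : IsAG I) :
    ∃ j, gradedPiece I j = socleSub I ∧ ∀ i, j < i → gradedPiece I i = ⊥ := by
  obtain ⟨hhom, htop, _, hsoc⟩ := hI
  obtain ⟨j, hj, hlt⟩ := exists_gradedPiece_ne_bot_and_eq_bot hhom htop
  exact ⟨j, Submodule.eq_of_le_of_finrank_le (gradedPiece_le_socleSub (hlt _ j.lt_succ_self))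
    (hsoc ▸ Submodule.one_le_finrank_iff.2 hj), hlt⟩

theorem exists_mul_mem_socleSub (h : gradedPiece I j = ⊥) {a : MvPolynomial (Fin n) K ⧸ I}
    (ha : a ≠ 0) : ∃ b, b * a ∈ socleSub I ∧ b * a ≠ 0 := by
  have hex : ∃ d, ∀ b ∈ gradedPiece I d, b * a = 0 :=
    ⟨j, fun b hb => by rw [(Submodule.mem_bot K).1 (h ▸ hb : b ∈ _), zero_mul]⟩
  obtain ⟨d, hd, hmin⟩ := Nat.findX hex
  cases d with
  | zero =>
    refine absurd (hd (Ideal.Quotient.mk I 1) (mk_mem_gradedPiece (isHomogeneous_one _ _))) ?_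
    rwa [map_one, one_mul]
  | succ d =>
    obtain ⟨b, hb, hba⟩ : ∃ b ∈ gradedPiece I d, b * a ≠ 0 := by
      simpa only [not_forall, exists_prop] using hmin d d.lt_succ_self
    refine ⟨b, mem_socleSub_iff.2 fun v => ?_, hba⟩
    rw [← mul_assoc, mul_comm _ b]
    exact hd _ (mul_mem_gradedPiece hb (mk_mem_gradedPiece (isHomogeneous_X K v)))

end GradedPiece

section MacaulayDuality

/-- The functional `φ` is homogeneous of degree `j`: it vanishes on the forms of every degree other
than `j`. For `φ` regarded as an element of the graded dual of `K[x₁, …, xₙ]` (its divided power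
algebra) this is the usual homogeneity of a Macaulay dual generator. -/
def IsHomogFunctional (φ : MvPolynomial (Fin n) K →ₗ[K] K) (j : ℕ) : Prop :=
  ∀ ⦃p : MvPolynomial (Fin n) K⦄ ⦃i : ℕ⦄, p.IsHomogeneous i → i ≠ j → φ p = 0

/-- The annihilator of `φ` under the contraction action of the polynomial ring on its dual, i.e. the
Macaulay dual ideal of `φ`. -/
def dualIdeal (φ : MvPolynomial (Fin n) K →ₗ[K] K) : Ideal (MvPolynomial (Fin n) K) where
  carrier := {p | ∀ r, φ (r * p) = 0}
  zero_mem' r := by rw [mul_zero, map_zero]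
  add_mem' hp hq r := by rw [mul_add, map_add, hp r, hq r, add_zero]
  smul_mem' c p hp r := by rw [smul_eq_mul, ← mul_assoc, hp]

variable {φ : MvPolynomial (Fin n) K →ₗ[K] K} {p q : MvPolynomial (Fin n) K} {i j d e : ℕ}

theorem mem_dualIdeal : p ∈ dualIdeal φ ↔ ∀ r, φ (r * p) = 0 :=
  Iff.rfl

/-- The functional which a functional `φ` induces on the quotient by its dual ideal. -/
def dualIdealFunctional (φ : MvPolynomial (Fin n) K →ₗ[K] K) :
    (MvPolynomial (Fin n) K ⧸ dualIdeal φ) →ₗ[K] K :=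
  ((dualIdeal φ).restrictScalars K).liftQ φ (fun p hp => one_mul p ▸ hp 1) ∘ₗ
    (Submodule.Quotient.restrictScalarsEquiv K (dualIdeal φ)).symm

@[simp]
theorem dualIdealFunctional_mk (φ : MvPolynomial (Fin n) K →ₗ[K] K) (p : MvPolynomial (Fin n) K) :
    dualIdealFunctional φ (Ideal.Quotient.mk _ p) = φ p :=
  rfl

namespace IsHomogFunctional

theorem comp_mulLeft (hφ : IsHomogFunctional φ j) (hq : q.IsHomogeneous d) (h : d + e = j) :
    IsHomogFunctional (φ ∘ₗ LinearMap.mulLeft K q) e :=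
  fun _ _ hp hi => hφ (hq.mul hp) (by omega)

theorem apply_mul_homogeneousComponent (hφ : IsHomogFunctional φ j) (hq : q.IsHomogeneous e)
    (h : i + e = j) (p : MvPolynomial (Fin n) K) :
    φ (q * homogeneousComponent i p) = φ (q * p) := by
  nth_rewrite 2 [← sum_homogeneousComponent p]
  rw [Finset.mul_sum, map_sum, Finset.sum_eq_single i]
  · intro k _ hk
    exact hφ (hq.mul (homogeneousComponent_isHomogeneous k p)) (by omega)
  · intro hi
    rw [homogeneousComponent_eq_zero _ _ (by simpa using hi), mul_zero, map_zero]

theorem apply_homogeneousComponent (hφ : IsHomogFunctional φ j) (p : MvPolynomial (Fin n) K) :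
    φ (homogeneousComponent j p) = φ p := by
  simpa only [one_mul] using
    hφ.apply_mul_homogeneousComponent (isHomogeneous_one _ _) (add_zero j) p

theorem mem_dualIdeal_iff (hφ : IsHomogFunctional φ j) (hp : p.IsHomogeneous i) (h : i + e = j) :
    p ∈ dualIdeal φ ↔ ∀ q : MvPolynomial (Fin n) K, q.IsHomogeneous e → φ (q * p) = 0 := by
  refine ⟨fun hp q _ => hp q, fun H r => ?_⟩
  rw [mul_comm, ← hφ.apply_mul_homogeneousComponent hp (by omega : e + i = j), mul_comm]
  exact H _ (homogeneousComponent_isHomogeneous e r)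

theorem mem_dualIdeal_of_lt (hφ : IsHomogFunctional φ j) (hp : p.IsHomogeneous i) (h : j < i) :
    p ∈ dualIdeal φ := by
  intro r
  rw [← sum_homogeneousComponent r, Finset.sum_mul, map_sum]
  exact Finset.sum_eq_zero fun k _ =>
    hφ ((homogeneousComponent_isHomogeneous k r).mul hp) (by omega)

theorem gradedPiece_dualIdeal_eq_bot (hφ : IsHomogFunctional φ j) (h : j < i) :
    gradedPiece (dualIdeal φ) i = ⊥ := by
  refine (Submodule.eq_bot_iff _).2 ?_
  rintro _ ⟨p, hp, rfl⟩
  exact Ideal.Quotient.eq_zero_iff_mem.2 (hφ.mem_dualIdeal_of_lt hp h)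

theorem hilbFn_dualIdeal_eq_zero (hφ : IsHomogFunctional φ j) (h : j < i) :
    hilbFn (dualIdeal φ) i = 0 :=
  gradedPiece_eq_bot_iff.1 (hφ.gradedPiece_dualIdeal_eq_bot h)

theorem isHomogIdeal_dualIdeal (hφ : IsHomogFunctional φ j) : IsHomogIdeal (dualIdeal φ) := by
  intro p hp i
  obtain hij | ⟨e, rfl⟩ := (lt_or_ge j i).imp_right Nat.exists_eq_add_of_le
  · exact hφ.mem_dualIdeal_of_lt (homogeneousComponent_isHomogeneous i p) hij
  · refine (hφ.mem_dualIdeal_iff (homogeneousComponent_isHomogeneous i p) rfl).2 fun q hq => ?_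
    rw [hφ.apply_mul_homogeneousComponent hq rfl]
    exact hp q

end IsHomogFunctional

theorem dualIdeal_ne_top (hφ : φ ≠ 0) : dualIdeal φ ≠ ⊤ := by
  refine fun h => hφ (LinearMap.ext fun p => ?_)
  have h1 : (1 : MvPolynomial (Fin n) K) ∈ dualIdeal φ := h ▸ Submodule.mem_top
  rw [LinearMap.zero_apply, ← mul_one p]
  exact h1 p

theorem apply_mul_of_X_mul_mem_dualIdeal (hq : ∀ v, X v * q ∈ dualIdeal φ)
    (r : MvPolynomial (Fin n) K) : φ (r * q) = coeff 0 r * φ q := by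
  induction r using MvPolynomial.induction_on with
  | C a => rw [← smul_eq_C_mul, map_smul, coeff_C, if_pos rfl, smul_eq_mul]
  | add r s hr hs => rw [add_mul, map_add, hr, hs, coeff_add, add_mul]
  | mul_X r v _ => rw [mul_assoc, mem_dualIdeal.1 (hq v), coeff_mul_X', if_neg (by simp), zero_mul]

theorem eq_zero_of_mem_socleSub_dualIdeal {a : MvPolynomial (Fin n) K ⧸ dualIdeal φ}
    (ha : a ∈ socleSub (dualIdeal φ)) (h : dualIdealFunctional φ a = 0) : a = 0 := by
  obtain ⟨q, rfl⟩ := Ideal.Quotient.mk_surjective a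
  have hq : ∀ v, X v * q ∈ dualIdeal φ := fun v => by
    rw [← Ideal.Quotient.eq_zero_iff_mem, map_mul, mem_socleSub_iff.1 ha v]
  refine Ideal.Quotient.eq_zero_iff_mem.2 fun r => ?_
  rw [apply_mul_of_X_mul_mem_dualIdeal hq, ← dualIdealFunctional_mk φ q, h, mul_zero]

theorem IsHomogFunctional.finrank_socleSub_dualIdeal (hφ : IsHomogFunctional φ j) (h0 : φ ≠ 0) :
    Module.finrank K (socleSub (dualIdeal φ)) = 1 := by
  obtain ⟨p, hp⟩ : ∃ p, φ p ≠ 0 := not_forall.1 fun h => h0 (LinearMap.ext h)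
  have hw : Ideal.Quotient.mk (dualIdeal φ) (homogeneousComponent j p) ∈ socleSub (dualIdeal φ) :=
    gradedPiece_le_socleSub (hφ.gradedPiece_dualIdeal_eq_bot j.lt_succ_self)
      (mk_mem_gradedPiece (homogeneousComponent_isHomogeneous j p))
  let f := (dualIdealFunctional φ).domRestrict (socleSub (dualIdeal φ))
  have hinj : Function.Injective f := (injective_iff_map_eq_zero f).2 fun a ha =>
    Subtype.ext (eq_zero_of_mem_socleSub_dualIdeal a.2 ha)
  have hsurj : Function.Surjective f := LinearMap.surjective fun h => hp <| by
    rw [← hφ.apply_homogeneousComponent]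
    exact LinearMap.congr_fun h ⟨_, hw⟩
  rw [(LinearEquiv.ofBijective f ⟨hinj, hsurj⟩).finrank_eq, Module.finrank_self]

theorem IsHomogFunctional.isAG_dualIdeal (hφ : IsHomogFunctional φ j) (h0 : φ ≠ 0) :
    IsAG (dualIdeal φ) :=
  ⟨hφ.isHomogIdeal_dualIdeal, dualIdeal_ne_top h0,
    finiteDimensional_quotient fun _ => hφ.gradedPiece_dualIdeal_eq_bot,
    hφ.finrank_socleSub_dualIdeal h0⟩

theorem exists_eq_dualIdeal {I : Ideal (MvPolynomial (Fin n) K)} (hI : IsAG I) :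
    ∃ (j : ℕ) (φ : MvPolynomial (Fin n) K →ₗ[K] K), IsHomogFunctional φ j ∧ φ ≠ 0 ∧
      I = dualIdeal φ := by
  obtain ⟨j, hsocle, hlt⟩ := exists_gradedPiece_eq_socleSub hI
  obtain ⟨hhom, htop, _, hsoc⟩ := hI
  obtain ⟨f, hf⟩ := exists_dual_injOn_of_finrank_eq_one hsoc
  let φ : MvPolynomial (Fin n) K →ₗ[K] K :=
    f ∘ₗ (Ideal.Quotient.mkₐ K I).toLinearMap ∘ₗ homogeneousComponent j
  have hφ : IsHomogFunctional φ j := fun p i hp hij => by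
    simp [φ, homogeneousComponent_of_mem hp, hij.symm]
  have hφ_eq {p q : MvPolynomial (Fin n) K} (hp : p.IsHomogeneous j)
      (h : Ideal.Quotient.mk I q = Ideal.Quotient.mk I p) : φ q = f (Ideal.Quotient.mk I p) :=
    congrArg f (mk_homogeneousComponent_of_mk_eq hhom hp h)
  have hI_le : I ≤ dualIdeal φ := fun p hp r => by
    rw [hφ_eq (isHomogeneous_zero _ K j), map_zero, map_zero]
    rw [map_zero, Ideal.Quotient.eq_zero_iff_mem]
    exact I.mul_mem_left r hp
  have hle_I : dualIdeal φ ≤ I := fun p hp => by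
    by_contra hpI
    obtain ⟨b, hb, hb0⟩ := exists_mul_mem_socleSub (hlt _ j.lt_succ_self)
      (mt Ideal.Quotient.eq_zero_iff_mem.1 hpI)
    obtain ⟨r, rfl⟩ := Ideal.Quotient.mk_surjective b
    obtain ⟨q, hq, hqr⟩ := mem_gradedPiece_iff.1 (hsocle ▸ hb)
    refine hb0 (hf _ hb ?_)
    rw [← hqr, ← hφ_eq hq ((map_mul _ _ _).trans hqr.symm)]
    exact hp r
  have hI_eq := hI_le.antisymm hle_I
  refine ⟨j, φ, hφ, fun h => htop ?_, hI_eq⟩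
  rw [hI_eq, h, Ideal.eq_top_iff_one]
  exact fun r => rfl

end MacaulayDuality

section HilbertFunction

theorem span_pair_mul {R A : Type*} [CommSemiring R] [Semiring A] [Algebra R A] (a b : A)
    (N : Submodule R A) :
    Submodule.span R {a, b} * N =
      N.map (LinearMap.mulLeft R a) ⊔ N.map (LinearMap.mulLeft R b) := by
  rw [Submodule.span_insert, Submodule.sup_mul, Submodule.span_singleton_mul,
    Submodule.span_singleton_mul]
  rfl

variable {φ : MvPolynomial (Fin n) K →ₗ[K] K} {i j e : ℕ}

theorem IsHomogFunctional.hilbFn_dualIdeal_le (hφ : IsHomogFunctional φ j) (h : i + e = j) :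
    hilbFn (dualIdeal φ) i ≤ hilbFn (dualIdeal φ) e := by
  let B : gradedPiece (dualIdeal φ) i →ₗ[K] Module.Dual K (gradedPiece (dualIdeal φ) e) :=
    ((LinearMap.mul K _).compr₂ (dualIdealFunctional φ)).domRestrict₁₂ _ _
  have hB : Function.Injective B := by
    refine (injective_iff_map_eq_zero B).2 ?_
    rintro ⟨_, p, hp, rfl⟩ hBp
    refine Subtype.ext (Ideal.Quotient.eq_zero_iff_mem.2 ?_)
    refine (hφ.mem_dualIdeal_iff hp h).2 fun q hq => ?_
    rw [mul_comm]
    exact LinearMap.congr_fun hBp ⟨_, mk_mem_gradedPiece hq⟩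
  exact (LinearMap.finrank_le_finrank_of_injective hB).trans_eq Subspace.dual_finrank_eq

theorem IsHomogFunctional.hilbFn_dualIdeal_symm (hφ : IsHomogFunctional φ j) (h : i + e = j) :
    hilbFn (dualIdeal φ) i = hilbFn (dualIdeal φ) e :=
  (hφ.hilbFn_dualIdeal_le h).antisymm (hφ.hilbFn_dualIdeal_le (add_comm e i ▸ h))

-- For `A` Gorenstein, `ℓA ≅ A ⧸ (0 : ℓ)` is again Gorenstein, with dual generator `φ(ℓ · )`.
theorem finrank_map_mulLeft_gradedPiece_dualIdeal (φ : MvPolynomial (Fin n) K →ₗ[K] K)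
    (p : MvPolynomial (Fin n) K) (i : ℕ) :
    Module.finrank K ((gradedPiece (dualIdeal φ) i).map
      (LinearMap.mulLeft K (Ideal.Quotient.mk (dualIdeal φ) p))) =
      hilbFn (dualIdeal (φ ∘ₗ LinearMap.mulLeft K p)) i := by
  rw [gradedPiece, ← Submodule.map_comp, hilbFn, gradedPiece]
  refine finrank_map_eq_of_ker_eq _ (Submodule.ext fun q => ?_)
  have hmem : p * q ∈ dualIdeal φ ↔ q ∈ dualIdeal (φ ∘ₗ LinearMap.mulLeft K p) := by
    simp only [mem_dualIdeal, LinearMap.comp_apply, LinearMap.mulLeft_apply, mul_left_comm]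
  exact ((Ideal.Quotient.eq_zero_iff_mem (I := dualIdeal φ)).trans hmem).trans
    Ideal.Quotient.eq_zero_iff_mem.symm

theorem hilbFn_add_finrank_map_mulLeft_le {I : Ideal (MvPolynomial (Fin n) K)}
    {a b : MvPolynomial (Fin n) K ⧸ I} (ha : a ∈ gradedPiece I 1) (hb : b ∈ gradedPiece I 1)
    (h : gradedPiece I 2 ≤ Submodule.span K {a, b} * gradedPiece I 1) (i : ℕ) :
    hilbFn I (i + 2) + Module.finrank K ((gradedPiece I i).map (LinearMap.mulLeft K a)) ≤
      hilbFn I (i + 1) +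
        Module.finrank K ((gradedPiece I (i + 1)).map (LinearMap.mulLeft K a)) := by
  refine finrank_add_finrank_le_of_le_sup (f := LinearMap.mulLeft K b) ?_ ?_ ?_
  · rintro _ ⟨c, hc, rfl⟩
    exact add_comm 1 i ▸ mul_mem_gradedPiece ha hc
  · rintro _ ⟨_, ⟨c, hc, rfl⟩, rfl⟩
    exact ⟨b * c, add_comm 1 i ▸ mul_mem_gradedPiece hb hc, mul_left_comm a b c⟩
  · have hle : gradedPiece I 2 * gradedPiece I i ≤
        Submodule.span K {a, b} * (gradedPiece I 1 * gradedPiece I i) :=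
      (mul_le_mul' h le_rfl).trans_eq (mul_assoc (Submodule.span K {a, b}) _ _)
    rwa [gradedPiece_mul, gradedPiece_mul, add_comm, add_comm 1, span_pair_mul] at hle

theorem IsHomogFunctional.hilbFn_dualIdeal_concave (hφ : IsHomogFunctional φ j)
    {a b : MvPolynomial (Fin n) K ⧸ dualIdeal φ} (ha : a ∈ gradedPiece (dualIdeal φ) 1)
    (hb : b ∈ gradedPiece (dualIdeal φ) 1)
    (h : gradedPiece (dualIdeal φ) 2 ≤ Submodule.span K {a, b} * gradedPiece (dualIdeal φ) 1)
    (hij : i + 2 ≤ j) :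
    hilbFn (dualIdeal φ) (i + 2) + hilbFn (dualIdeal φ) i ≤ 2 * hilbFn (dualIdeal φ) (i + 1) := by
  obtain ⟨e, rfl⟩ := Nat.exists_eq_add_of_le' hij
  obtain ⟨p, hp, rfl⟩ := mem_gradedPiece_iff.1 ha
  have hψ : IsHomogFunctional (φ ∘ₗ LinearMap.mulLeft K p) (i + e + 1) :=
    hφ.comp_mulLeft hp (by omega)
  -- By symmetry of `A` and `ℓA`, the inequality in degree `e` bounds `A_(i+1)` and `A_i` from the
  -- other side, and the terms in `ℓA` cancel.
  have hi := hilbFn_add_finrank_map_mulLeft_le ha hb h i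
  have he := hilbFn_add_finrank_map_mulLeft_le ha hb h e
  simp only [finrank_map_mulLeft_gradedPiece_dualIdeal] at hi he
  rw [hφ.hilbFn_dualIdeal_symm (by omega : e + 2 + i = e + (i + 2)),
    hφ.hilbFn_dualIdeal_symm (by omega : e + 1 + (i + 1) = e + (i + 2)),
    hψ.hilbFn_dualIdeal_symm (by omega : e + (i + 1) = i + e + 1),
    hψ.hilbFn_dualIdeal_symm (by omega : e + 1 + i = i + e + 1)] at he
  omega

end HilbertFunction

section Quadrics

-- The quadratic form with coefficients `c` is nonzero at a unit vector or at the sum of two.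
theorem exists_sum_mul_map_mul_ne_zero {ι R : Type*} [Fintype ι] [CommSemiring R]
    {c : Sym2 ι → R} (hc : c ≠ 0) :
    ∃ (p : ι → R) (i : ι), p i = 1 ∧ ∑ s, c s * (s.map p).mul ≠ 0 := by
  by_cases hdiag : ∃ i, c s(i, i) ≠ 0
  · obtain ⟨i, hi⟩ := hdiag
    refine ⟨Pi.single i 1, i, Pi.single_eq_same i 1, ?_⟩
    rw [Finset.sum_eq_single s(i, i) _ (by simp)]
    · simpa using hi
    · refine fun s _ hs => ?_
      induction s using Sym2.ind with
      | _ a b => by_cases ha : a = i <;> by_cases hb : b = i <;> simp_all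
  · push Not at hdiag
    obtain ⟨s, hs⟩ := Function.ne_iff.1 hc
    induction s using Sym2.ind with
    | _ i k =>
    refine ⟨Set.indicator {i, k} 1, i, by simp, ?_⟩
    rw [Finset.sum_eq_single s(i, k) _ (by simp)]
    · simpa using hs
    · refine fun s _ hs => ?_
      induction s using Sym2.ind with
      | _ a b =>
        by_cases ha : a = i ∨ a = k <;> by_cases hb : b = i ∨ b = k
        · obtain rfl : a = b := by
            rw [ne_eq, Sym2.eq_iff] at hs
            grind
          rw [hdiag, zero_mul]
        all_goals simp [Set.indicator, ha, hb]

variable {A : Type*} [CommRing A] [Algebra K A]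

theorem mul_sub_smul_mul_mem {U V : Submodule K A} {a b w : A} {α β : K} (hU : a - α • w ∈ U)
    (hU' : b - β • w ∈ U) (hb : b ∈ V) (hw : w ∈ V) :
    a * b - (α * β) • (w * w) ∈ U * V := by
  have h : a * b - (α * β) • (w * w) = (a - α • w) * b + α • ((b - β • w) * w) := by
    simp only [sub_mul, smul_sub, smul_mul_assoc, mul_comm b w, mul_smul]
    abel
  rw [h]
  exact add_mem (Submodule.mul_mem_mul hU hb)
    (Submodule.smul_mem _ _ (Submodule.mul_mem_mul hU' hw))

theorem exists_sum_smul_map_mul_eq_zero {ι : Type*} [Fintype ι] {v : ι → A}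
    (h : Module.finrank K (Submodule.span K (Set.range v) * Submodule.span K (Set.range v) :
      Submodule K A) < (Fintype.card ι + 1).choose 2) :
    ∃ c : Sym2 ι → K, c ≠ 0 ∧ ∑ s, c s • (s.map v).mul = 0 := by
  have hdep : ¬ LinearIndependent K fun s : Sym2 ι => (s.map v).mul := by
    intro hli
    rw [← Sym2.card, ← finrank_span_eq_card hli] at h
    have : FiniteDimensional K
        (Submodule.span K (Set.range v) * Submodule.span K (Set.range v) : Submodule K A) :=
      Module.Finite.iff_fg.2 ((Submodule.fg_span (Set.finite_range v)).mul
        (Submodule.fg_span (Set.finite_range v)))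
    refine h.not_ge (Submodule.finrank_mono (Submodule.span_le.2 ?_))
    rintro _ ⟨s, rfl⟩
    induction s using Sym2.ind with
    | _ a b =>
      exact Submodule.mul_mem_mul (Submodule.subset_span (Set.mem_range_self a))
        (Submodule.subset_span (Set.mem_range_self b))
  obtain ⟨c, hc, s, hs⟩ := Fintype.not_linearIndependent_iff.1 hdep
  exact ⟨c, fun h0 => hs (congrFun h0 s), hc⟩

-- Modulo `U * span v`, every product `v k * v l` is `p k * p l` times `v i * v i`, so the quadratic
-- relation `c` says that a nonzero multiple of `v i * v i` vanishes.
theorem span_mul_span_le_of_sum_eq_zero {ι : Type*} [Fintype ι] {U : Submodule K A}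
    {v : ι → A} {p : ι → K} {i : ι} (hU : ∀ k, v k - p k • v i ∈ U) {c : Sym2 ι → K}
    (hc : ∑ s, c s • (s.map v).mul = 0) (hp : ∑ s, c s * (s.map p).mul ≠ 0) :
    Submodule.span K (Set.range v) * Submodule.span K (Set.range v) ≤
      U * Submodule.span K (Set.range v) := by
  have hv (k : ι) : v k ∈ Submodule.span K (Set.range v) := Submodule.subset_span ⟨k, rfl⟩
  have hcongr (k l : ι) := mul_sub_smul_mul_mem (hU k) (hU l) (hv l) (hv i)
  have hsq : v i * v i ∈ U * Submodule.span K (Set.range v) := by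
    refine (Submodule.smul_mem_iff _ hp).1 ?_
    rw [← neg_mem_iff, ← zero_sub, ← hc, Finset.sum_smul, ← Finset.sum_sub_distrib]
    refine sum_mem fun s _ => ?_
    rw [mul_smul, ← smul_sub]
    refine Submodule.smul_mem _ _ ?_
    induction s using Sym2.ind with
    | _ k l => exact hcongr k l
  rw [Submodule.span_mul_span, Submodule.span_le]
  rintro _ ⟨_, ⟨k, rfl⟩, _, ⟨l, rfl⟩, rfl⟩
  simpa only [sub_add_cancel, SetLike.mem_coe] using
    add_mem (hcongr k l) (Submodule.smul_mem _ (p k * p l) hsq)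

theorem exists_span_mul_span_le_of_finrank_lt {v : Fin (n + 1) → A}
    (h : Module.finrank K (Submodule.span K (Set.range v) * Submodule.span K (Set.range v) :
      Submodule K A) < (n + 2).choose 2) :
    ∃ u : Fin n → A, (∀ k, u k ∈ Submodule.span K (Set.range v)) ∧
      Submodule.span K (Set.range v) * Submodule.span K (Set.range v) ≤
        Submodule.span K (Set.range u) * Submodule.span K (Set.range v) := by
  obtain ⟨c, hc0, hc⟩ := exists_sum_smul_map_mul_eq_zero (by rwa [Fintype.card_fin])
  obtain ⟨p, i, hpi, hp⟩ := exists_sum_mul_map_mul_ne_zero hc0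
  have hv (k) : v k ∈ Submodule.span K (Set.range v) := Submodule.subset_span ⟨k, rfl⟩
  refine ⟨fun k => v (i.succAbove k) - p (i.succAbove k) • v i,
    fun k => sub_mem (hv _) (Submodule.smul_mem _ _ (hv i)),
    span_mul_span_le_of_sum_eq_zero (i := i) (fun k => ?_) hc hp⟩
  obtain rfl | ⟨k, rfl⟩ := i.eq_self_or_eq_succAbove k
  · rw [hpi, one_smul, sub_self]
    exact zero_mem _
  · exact Submodule.subset_span ⟨k, rfl⟩

theorem exists_gradedPiece_two_le {I : Ideal (MvPolynomial (Fin n) K)} (h1 : hilbFn I 1 = 3)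
    (h2 : hilbFn I 2 ≤ 5) :
    ∃ a ∈ gradedPiece I 1, ∃ b ∈ gradedPiece I 1,
      gradedPiece I 2 ≤ Submodule.span K {a, b} * gradedPiece I 1 := by
  let v := Module.finBasisOfFinrankEq K (gradedPiece I 1) h1
  have hv : Submodule.span K (Set.range fun k => (v k : MvPolynomial (Fin n) K ⧸ I)) =
      gradedPiece I 1 := by
    rw [← Submodule.coe_subtype, Set.range_comp', ← Submodule.map_span, v.span_eq,
      Submodule.map_top, Submodule.range_subtype]
  obtain ⟨u, hu, hle⟩ := exists_span_mul_span_le_of_finrank_lt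
    (v := fun k => (v k : MvPolynomial (Fin n) K ⧸ I)) (K := K) (n := 2)
    (by rw [hv, gradedPiece_mul]; exact Nat.lt_succ_of_le h2)
  have hrange : Set.range u = {u 0, u 1} := by
    ext
    simp only [Set.mem_range, Fin.exists_fin_two, Set.mem_insert_iff, Set.mem_singleton_iff,
      eq_comm]
  rw [hv, gradedPiece_mul, hrange] at hle
  exact ⟨u 0, hv ▸ hu 0, u 1, hv ▸ hu 1, hle⟩

end Quadrics

section ConcaveSequences

theorem exists_forall_lt_iff {P : ℕ → Prop} {N : ℕ} (h : ∀ i, i + 1 < N → P (i + 1) → P i) :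
    ∃ r ≤ N, ∀ i < N, (P i ↔ i < r) := by
  obtain ⟨r, hr, hmin⟩ := Nat.findX (⟨N, Or.inl le_rfl⟩ : ∃ r, N ≤ r ∨ ¬ P r)
  have hrN : r ≤ N := not_lt.1 fun hlt => hmin N hlt (Or.inl le_rfl)
  refine ⟨r, hrN, fun i hi => ⟨fun hPi => not_le.1 fun hri => ?_, fun hir => ?_⟩⟩
  · exact hr.elim (by omega) fun hPr =>
      hPr (Nat.decreasingInduction' (fun k hki _ => h k (by omega)) hri hPi)
  · simpa using fun hPi => hmin i hir (Or.inr hPi)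

variable {T : ℕ → ℕ} {N j : ℕ}

theorem exists_eq_add_min_add_min (h1 : T 1 ≤ T 0 + 2) (hmono : ∀ i < N, T i ≤ T (i + 1))
    (hconc : ∀ i, i + 2 ≤ N → T (i + 2) + T i ≤ 2 * T (i + 1)) :
    ∃ t r, t ≤ r ∧ r ≤ N ∧ ∀ i ≤ N, T i = T 0 + min t i + min r i := by
  have hstep : ∀ i < N, T (i + 1) ≤ T i + 2 := by
    intro i
    induction i with
    | zero => exact fun _ => h1
    | succ i ih =>
      intro hi
      have := ih (by omega)
      have : T (i + 1 + 1) + T i ≤ 2 * T (i + 1) := hconc i hi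
      omega
  obtain ⟨t, htN, ht⟩ := exists_forall_lt_iff (P := fun i => T i + 2 ≤ T (i + 1)) (N := N)
    fun i hi h => by
      have : T (i + 1 + 1) + T i ≤ 2 * T (i + 1) := hconc i hi
      omega
  obtain ⟨r, hrN, hr⟩ := exists_forall_lt_iff (P := fun i => T i + 1 ≤ T (i + 1)) (N := N)
    fun i hi h => by
      have : T (i + 1 + 1) + T i ≤ 2 * T (i + 1) := hconc i hi
      omega
  refine ⟨t, r, not_lt.1 fun hlt => ?_, hrN, fun i => ?_⟩
  · have := (ht r (by omega)).2 hlt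
    have := (hr r (by omega)).1 (by omega)
    omega
  · induction i with
    | zero => simp
    | succ i ih =>
      intro hi
      have := ih (by omega)
      have := hstep i hi
      have := hmono i hi
      have := ht i hi
      have := hr i hi
      omega

theorem add_le_add_of_concave (hconc : ∀ i, i + 2 ≤ j → T (i + 2) + T i ≤ 2 * T (i + 1)) {a : ℕ} :
    ∀ d, a + d + 1 ≤ j → T (a + d + 1) + T a ≤ T (a + d) + T (a + 1)
  | 0, _ => (add_comm _ _).le
  | d + 1, h => by
    have ih := add_le_add_of_concave hconc (a := a) d (by omega)
    have : T (a + (d + 1) + 1) + T (a + d) ≤ 2 * T (a + (d + 1)) := hconc (a + d) (by omega)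
    have : T (a + (d + 1)) + T a ≤ T (a + d) + T (a + 1) := ih
    omega

theorem le_succ_of_concave_of_symm (hsymm : ∀ i e, i + e = j → T i = T e)
    (hconc : ∀ i, i + 2 ≤ j → T (i + 2) + T i ≤ 2 * T (i + 1)) {a : ℕ} (ha : 2 * (a + 1) ≤ j) :
    T a ≤ T (a + 1) := by
  obtain ⟨d, rfl⟩ := Nat.exists_eq_add_of_le ha
  have := add_le_add_of_concave hconc (a := a) (d + 1) (by omega)
  have := hsymm a (a + (d + 1) + 1) (by omega)
  have := hsymm (a + 1) (a + (d + 1)) (by omega)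
  omega

/-- The symmetric sequence of socle degree `j` with first-half difference vector `(1, 2^t, 1^m)`.
It is meant for `2 * (t + m) ≤ j`, when its maximum (the Sperner number) is `1 + 2 * t + m`. -/
def orderTwoSeq (t m j : ℕ) : ℕ → ℕ :=
  symSeq ([1] ++ List.replicate t 2 ++ List.replicate m 1) j

theorem orderTwoSeq_apply (t m j i : ℕ) : orderTwoSeq t m j i =
    if i ≤ j then 1 + min t (min i (j - i)) + min (t + m) (min i (j - i)) else 0 := by
  have hsum (k : ℕ) : (([1] ++ List.replicate t 2 ++ List.replicate m 1).take (k + 1)).sum =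
      1 + min t k + min (t + m) k := by
    simp only [List.cons_append, List.nil_append, List.take_succ_cons, List.take_append,
      List.take_replicate, List.length_replicate, List.sum_cons, List.sum_append,
      List.sum_replicate, smul_eq_mul, mul_one]
    omega
  rw [orderTwoSeq, symSeq, hsum]

theorem eq_orderTwoSeq {t m : ℕ} (hsymm : ∀ i e, i + e = j → T i = T e)
    (hzero : ∀ i, j < i → T i = 0) (hhalf : ∀ i, 2 * i ≤ j → T i = 1 + min t i + min (t + m) i) :
    T = orderTwoSeq t m j := by
  funext i
  rw [orderTwoSeq_apply]
  split_ifs with hij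
  · obtain hi | hi := le_total i (j - i)
    · rw [min_eq_left hi, hhalf i (by omega)]
    · rw [min_eq_right hi, hsymm i (j - i) (by omega), hhalf _ (by omega)]
  · exact hzero i (by omega)

theorem exists_eq_orderTwoSeq_of_concave (h0 : T 0 = 1) (h1 : T 1 = 3)
    (hzero : ∀ i, j < i → T i = 0) (hsymm : ∀ i e, i + e = j → T i = T e)
    (hconc : ∀ i, i + 2 ≤ j → T (i + 2) + T i ≤ 2 * T (i + 1)) :
    ∃ t m, 1 ≤ t ∧ 2 * (t + m) ≤ j ∧ T = orderTwoSeq t m j := by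
  have hj : 2 ≤ j := by
    have hj0 : ¬ j < 1 := fun h => by simp [hzero 1 h] at h1
    have hj1 : j ≠ 1 := fun h => by simp [hsymm 0 1 h.symm, h1] at h0
    omega
  obtain ⟨t, r, htr, hr, hT⟩ := exists_eq_add_min_add_min (T := T) (N := j / 2) (by omega)
    (fun i hi => le_succ_of_concave_of_symm hsymm hconc (by omega))
    (fun i hi => hconc i (by omega))
  obtain ⟨m, rfl⟩ := Nat.exists_eq_add_of_le htr
  have := hT 1 (by omega)
  refine ⟨t, m, by omega, by omega, eq_orderTwoSeq hsymm hzero fun i hi => ?_⟩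
  rw [hT i (by omega), h0]

theorem orderTwoSeq_le_six_iff {t m : ℕ} (h : 2 * (t + m) ≤ j) :
    (∀ i, orderTwoSeq t m j i ≤ 6) ↔ 2 * t + m ≤ 5 := by
  simp only [orderTwoSeq_apply]
  refine ⟨fun H => ?_, fun H i => ?_⟩
  · have := H (t + m)
    rw [if_pos (by omega)] at this
    omega
  · split_ifs <;> omega

theorem exists_fam_iff_exists_orderTwoSeq (T : ℕ → ℕ) :
    (∃ s, 7 ≤ s ∧ ∃ k, 1 ≤ k ∧
      ((∀ i, T i = famA s k i) ∨ (∀ i, T i = famB s k i) ∨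
       ∃ t, 3 ≤ t ∧ 2 * t + 1 ≤ s ∧ ∀ i, T i = famC t s k i)) ↔
    (∃ t m j, 1 ≤ t ∧ 2 * (t + m) ≤ j ∧ T = orderTwoSeq t m j) ∧ ¬ ∀ i, T i ≤ 6 := by
  constructor
  · suffices H : ∀ t m j, 1 ≤ t → 2 * (t + m) ≤ j → 6 ≤ 2 * t + m → T = orderTwoSeq t m j →
        (∃ t m j, 1 ≤ t ∧ 2 * (t + m) ≤ j ∧ T = orderTwoSeq t m j) ∧ ¬ ∀ i, T i ≤ 6 by
      rintro ⟨s, hs, k, hk, h | h | ⟨t, ht, hts, h⟩⟩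
      · exact H 1 (s - 3) (k + 2 * s - 5) (by omega) (by omega) (by omega) (funext h)
      · exact H 2 (s - 5) (k + 2 * s - 7) (by omega) (by omega) (by omega) (funext h)
      · exact H t (s - 2 * t - 1) (k + 2 * s - 2 * t - 3) (by omega) (by omega) (by omega)
          (funext h)
    rintro t m j ht hj hs rfl
    exact ⟨⟨t, m, j, ht, hj, rfl⟩, by rw [orderTwoSeq_le_six_iff hj]; omega⟩
  · rintro ⟨⟨t, m, j, ht, hj, rfl⟩, h6⟩
    rw [orderTwoSeq_le_six_iff hj] at h6
    refine ⟨1 + 2 * t + m, by omega, j + 1 - 2 * (t + m), by omega, ?_⟩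
    obtain rfl | rfl | ht3 : t = 1 ∨ t = 2 ∨ 3 ≤ t := by omega
    · refine Or.inl fun i => ?_
      rw [famA, show 1 + 2 * 1 + m - 3 = m by omega,
        show j + 1 - 2 * (1 + m) + 2 * (1 + 2 * 1 + m) - 5 = j by omega]
      rfl
    · refine Or.inr (Or.inl fun i => ?_)
      rw [famB, show 1 + 2 * 2 + m - 5 = m by omega,
        show j + 1 - 2 * (2 + m) + 2 * (1 + 2 * 2 + m) - 7 = j by omega]
      rfl
    · refine Or.inr (Or.inr ⟨t, ht3, by omega, fun i => ?_⟩)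
      rw [famC, show 1 + 2 * t + m - 2 * t - 1 = m by omega,
        show j + 1 - 2 * (t + m) + 2 * (1 + 2 * t + m) - 2 * t - 3 = j by omega]
      rfl

end ConcaveSequences

section Construction

open scoped Finset

variable {S : Finset (Fin n →₀ ℕ)} {A B e : Fin n →₀ ℕ} {i j : ℕ}

variable (K) in
/-- The functional Macaulay dual to the sum of the divided power monomials with exponents in `S`:
it sends a polynomial to the sum of its coefficients at the exponents in `S`. -/
def coeffSum (S : Finset (Fin n →₀ ℕ)) : MvPolynomial (Fin n) K →ₗ[K] K :=
  ∑ A ∈ S, lcoeff K A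

theorem coeffSum_apply (p : MvPolynomial (Fin n) K) : coeffSum K S p = ∑ A ∈ S, coeff A p := by
  simp only [coeffSum, LinearMap.sum_apply, lcoeff_apply]

theorem isHomogFunctional_coeffSum (hS : ∀ A ∈ S, A.degree = j) :
    IsHomogFunctional (coeffSum K S) j := fun p i hp hij => by
  rw [coeffSum_apply]
  exact Finset.sum_eq_zero fun A hA => hp.coeff_eq_zero (by rw [hS A hA]; exact hij.symm)

theorem coeffSum_monomial (hA : A ∈ S) : coeffSum K S (monomial A 1) = 1 := by
  simp only [coeffSum_apply, coeff_monomial, Finset.sum_ite_eq, if_pos hA]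

theorem coeffSum_ne_zero (hA : A ∈ S) : coeffSum K S ≠ 0 := fun h => one_ne_zero' K <| by
  rw [← coeffSum_monomial hA, h, LinearMap.zero_apply]

theorem coeffSum_monomial_of_notMem (hA : A ∉ S) : coeffSum K S (monomial A 1) = 0 := by
  simp only [coeffSum_apply, coeff_monomial, Finset.sum_ite_eq, if_neg hA]

theorem monomial_mem_dualIdeal_coeffSum (he : ∀ A ∈ S, ¬ e ≤ A) :
    monomial e 1 ∈ dualIdeal (coeffSum K S) := fun r => by
  rw [coeffSum_apply]
  exact Finset.sum_eq_zero fun A hA => by rw [coeff_mul_monomial', if_neg (he A hA)]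

-- If `B = A - e + e'` were in `S`, then `A - e ≤ A ⊓ B`, although `A - e` has degree `j - i`.
theorem sub_add_notMem {e' : Fin n →₀ ℕ} (hS : ∀ A ∈ S, A.degree = j)
    (hinf : ∀ A ∈ S, ∀ B ∈ S, A ≠ B → (A ⊓ B).degree + i < j) (hA : A ∈ S) (heA : e ≤ A)
    (hi : e.degree = i) (hne : e ≠ e') : A - e + e' ∉ S := by
  intro hB
  have hAB : A ≠ A - e + e' := fun h =>
    hne (add_left_cancel ((tsub_add_cancel_of_le heA).trans h))
  have hle : (A - e).degree ≤ (A ⊓ (A - e + e')).degree :=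
    Finsupp.degree_mono (le_inf tsub_le_self le_self_add)
  have hdeg : (A - e).degree + e.degree = A.degree := by
    rw [← map_add, tsub_add_cancel_of_le heA]
  have := hinf A hA _ hB hAB
  have := hS A hA
  omega

theorem hilbFn_dualIdeal_coeffSum (hS : ∀ A ∈ S, A.degree = j)
    (hinf : ∀ A ∈ S, ∀ B ∈ S, A ≠ B → (A ⊓ B).degree + i < j) :
    hilbFn (dualIdeal (coeffSum K S)) i = #{e ∈ S.biUnion Finset.Iic | e.degree = i} := by
  set D := {e ∈ S.biUnion Finset.Iic | e.degree = i}
  have hmem (e : D) : ∃ A ∈ S, (e : Fin n →₀ ℕ) ≤ A := by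
    simpa using (Finset.mem_filter.1 e.2).1
  have hdeg (e : D) : (e : Fin n →₀ ℕ).degree = i := (Finset.mem_filter.1 e.2).2
  choose m hmS hm using hmem
  have hli : LinearIndependent K fun e : D =>
      Ideal.Quotient.mk (dualIdeal (coeffSum K S)) (monomial (e : Fin n →₀ ℕ) 1) := by
    refine .of_pairwise_dual_eq_zero_one _ (fun e => dualIdealFunctional (coeffSum K S) ∘ₗ
      LinearMap.mulLeft K (Ideal.Quotient.mk _ (monomial (m e - (e : Fin n →₀ ℕ)) 1))) ?_ ?_
    · intro e e' hne
      rw [LinearMap.comp_apply, LinearMap.mulLeft_apply, ← map_mul, dualIdealFunctional_mk,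
        monomial_mul, mul_one]
      exact coeffSum_monomial_of_notMem (sub_add_notMem hS hinf (hmS e) (hm e) (hdeg e)
        (Subtype.coe_injective.ne hne))
    · intro e
      rw [LinearMap.comp_apply, LinearMap.mulLeft_apply, ← map_mul, dualIdealFunctional_mk,
        monomial_mul, mul_one, tsub_add_cancel_of_le (hm e)]
      exact coeffSum_monomial (hmS e)
  rw [hilbFn, gradedPiece_eq_span_of_monomial_mem (fun e he => hdeg ⟨e, he⟩),
    finrank_span_eq_card hli, Fintype.card_coe]
  refine fun e he heD => monomial_mem_dualIdeal_coeffSum fun A hA heA => heD ?_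
  exact Finset.mem_filter.2 ⟨Finset.mem_biUnion.2 ⟨A, hA, Finset.mem_Iic.2 heA⟩, he⟩

theorem le_single_add_single_iff {ι : Type*} {x z : ι} (hxz : x ≠ z) {a b : ℕ} {e : ι →₀ ℕ} :
    e ≤ Finsupp.single x a + Finsupp.single z b ↔
      ∃ k ≤ a, ∃ l ≤ b, e = Finsupp.single x k + Finsupp.single z l := by
  constructor
  · intro he
    refine ⟨e x, by simpa [hxz.symm] using he x, e z, by simpa [hxz] using he z, ?_⟩
    ext k
    have := he k
    by_cases hx : x = k <;> by_cases hz : z = k <;> simp_all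
  · rintro ⟨k, hk, l, hl, rfl⟩
    exact add_le_add (Finsupp.single_mono hk) (Finsupp.single_mono hl)

theorem card_filter_degree_Iic_single_add_single {x z : Fin n} (hxz : x ≠ z) (a b i : ℕ) :
    #{e ∈ Finset.Iic (Finsupp.single x a + Finsupp.single z b) | e.degree = i} =
      min a i + 1 - (i - b) := by
  have himage : {e ∈ Finset.Iic (Finsupp.single x a + Finsupp.single z b) | e.degree = i} =
      (Finset.Icc (i - b) (min a i)).image
        fun k => Finsupp.single x k + Finsupp.single z (i - k) := by
    ext e
    simp only [Finset.mem_filter, Finset.mem_Iic, le_single_add_single_iff hxz, Finset.mem_image,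
      Finset.mem_Icc]
    constructor
    · rintro ⟨⟨k, hk, l, hl, rfl⟩, rfl⟩
      simp only [map_add, Finsupp.degree_single]
      exact ⟨k, by omega, by rw [Nat.add_sub_cancel_left]⟩
    · rintro ⟨k, hk, rfl⟩
      simp only [map_add, Finsupp.degree_single]
      exact ⟨⟨k, by omega, i - k, by omega, rfl⟩, by omega⟩
  rw [himage, Finset.card_image_of_injective, Nat.card_Icc]
  intro k l hkl
  simpa [hxz] using DFunLike.congr_fun hkl x

theorem single_add_single_inf_single_add_single {x y z : Fin n} (hxy : x ≠ y) (hxz : x ≠ z)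
    (hyz : y ≠ z) {a b c d : ℕ} (h : d ≤ b) :
    (Finsupp.single x a + Finsupp.single z b) ⊓ (Finsupp.single y c + Finsupp.single z d) =
      Finsupp.single x 0 + Finsupp.single z d := by
  ext k
  simp only [Finsupp.inf_apply, Finsupp.add_apply, Finsupp.single_apply]
  by_cases hx : x = k <;> by_cases hy : y = k <;> by_cases hz : z = k <;> simp_all

/-- The exponents of the dual form `X ^ t * Z ^ (j - t) + Y ^ (j - r) * Z ^ r`. For `r = t + m - 1`
its Gorenstein quotient realizes `orderTwoSeq t m j`. -/
def dualExponents (x y z : Fin n) (t r j : ℕ) : Finset (Fin n →₀ ℕ) :=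
  {Finsupp.single x t + Finsupp.single z (j - t), Finsupp.single y (j - r) + Finsupp.single z r}

theorem degree_of_mem_dualExponents {x y z : Fin n} {t r : ℕ} (ht : t ≤ j) (hr : r ≤ j)
    (hA : A ∈ dualExponents x y z t r j) : A.degree = j := by
  rw [dualExponents, Finset.mem_insert, Finset.mem_singleton] at hA
  obtain rfl | rfl := hA <;> simp only [map_add, Finsupp.degree_single] <;> omega

theorem degree_inf_of_mem_dualExponents {x y z : Fin n} (hxy : x ≠ y) (hxz : x ≠ z)
    (hyz : y ≠ z) {t r : ℕ} (hj : t + r ≤ j) (hA : A ∈ dualExponents x y z t r j)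
    (hB : B ∈ dualExponents x y z t r j) (hAB : A ≠ B) : (A ⊓ B).degree = r := by
  have hinf := single_add_single_inf_single_add_single hxy hxz hyz (a := t) (c := j - r)
    (by omega : r ≤ j - t)
  rw [dualExponents, Finset.mem_insert, Finset.mem_singleton] at hA hB
  obtain rfl | rfl := hA <;> obtain rfl | rfl := hB
  · exact absurd rfl hAB
  · simp only [hinf, map_add, Finsupp.degree_single, zero_add]
  · simp only [inf_comm _ (Finsupp.single x t + _), hinf, map_add, Finsupp.degree_single, zero_add]
  · exact absurd rfl hAB

theorem card_filter_degree_biUnion_dualExponents {x y z : Fin n} (hxy : x ≠ y) (hxz : x ≠ z)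
    (hyz : y ≠ z) {t r : ℕ} (ht : t + i ≤ j) (hr : r + i ≤ j) (htr : t + r ≤ j) :
    #{e ∈ (dualExponents x y z t r j).biUnion Finset.Iic | e.degree = i} =
      1 + min t i + min (r + 1) i := by
  have hinter (A B : Fin n →₀ ℕ) : Finset.Iic A ∩ Finset.Iic B = Finset.Iic (A ⊓ B) := by
    ext e
    simp only [Finset.mem_inter, Finset.mem_Iic, le_inf_iff]
  have hcard := Finset.card_union_add_card_inter
    {e ∈ Finset.Iic (Finsupp.single x t + Finsupp.single z (j - t)) | e.degree = i}
    {e ∈ Finset.Iic (Finsupp.single y (j - r) + Finsupp.single z r) | e.degree = i}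
  rw [← Finset.filter_union, ← Finset.filter_inter_distrib, hinter,
    single_add_single_inf_single_add_single hxy hxz hyz (by omega),
    card_filter_degree_Iic_single_add_single hxz, card_filter_degree_Iic_single_add_single hxz,
    card_filter_degree_Iic_single_add_single hyz] at hcard
  rw [dualExponents, Finset.biUnion_insert, Finset.singleton_biUnion]
  omega

theorem hilbFn_dualIdeal_coeffSum_dualExponents {x y z : Fin n} (hxy : x ≠ y) (hxz : x ≠ z)
    (hyz : y ≠ z) {t r : ℕ} (ht : t + i ≤ j) (hr : r + i < j) (htr : t + r ≤ j) :
    hilbFn (dualIdeal (coeffSum K (dualExponents x y z t r j))) i =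
      1 + min t i + min (r + 1) i := by
  rw [hilbFn_dualIdeal_coeffSum fun A => degree_of_mem_dualExponents (by omega) (by omega),
    card_filter_degree_biUnion_dualExponents hxy hxz hyz ht hr.le htr]
  intro A hA B hB hAB
  rwa [degree_inf_of_mem_dualExponents hxy hxz hyz htr hA hB hAB]

theorem exists_isAG_hilbFn_eq_orderTwoSeq (hn : 3 ≤ n) {t m j : ℕ} (ht : 1 ≤ t)
    (hj : 2 * (t + m) ≤ j) :
    ∃ I : Ideal (MvPolynomial (Fin n) K), IsAG I ∧ hilbFn I = orderTwoSeq t m j := by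
  let S := dualExponents (⟨0, by omega⟩ : Fin n) ⟨1, by omega⟩ ⟨2, by omega⟩ t (t + m - 1) j
  have hφ : IsHomogFunctional (coeffSum K S) j :=
    isHomogFunctional_coeffSum fun A => degree_of_mem_dualExponents (by omega) (by omega)
  refine ⟨dualIdeal (coeffSum K S),
    hφ.isAG_dualIdeal (coeffSum_ne_zero (Finset.mem_insert_self _ _)),
    eq_orderTwoSeq (fun _ _ => hφ.hilbFn_dualIdeal_symm)
      (fun _ => hφ.hilbFn_dualIdeal_eq_zero) fun i hi => ?_⟩
  rw [hilbFn_dualIdeal_coeffSum_dualExponents (by simp) (by simp) (by simp) (by omega) (by omega)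
    (by omega), Nat.sub_add_cancel (by omega)]

end Construction

theorem stmt5_general (hn : 3 ≤ n) (T : ℕ → ℕ) :
    ((∃ I : Ideal (MvPolynomial (Fin n) K), IsAG I ∧ ∀ i, hilbFn I i = T i) ∧
        T 1 = 3 ∧ T 2 ≤ 5) ↔
    ∃ t m j, 1 ≤ t ∧ 2 * (t + m) ≤ j ∧ T = orderTwoSeq t m j := by
  constructor
  · rintro ⟨⟨I, hI, hT⟩, h1, h2⟩
    obtain rfl : hilbFn I = T := funext hT
    obtain ⟨j, φ, hφ, h0, rfl⟩ := exists_eq_dualIdeal hI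
    obtain ⟨a, ha, b, hb, hab⟩ := exists_gradedPiece_two_le h1 h2
    obtain ⟨t, m, h⟩ := exists_eq_orderTwoSeq_of_concave (hilbFn_zero (dualIdeal_ne_top h0)) h1
      (fun _ => hφ.hilbFn_dualIdeal_eq_zero) (fun _ _ => hφ.hilbFn_dualIdeal_symm)
      (fun _ => hφ.hilbFn_dualIdeal_concave ha hb hab)
    exact ⟨t, m, j, h⟩
  · rintro ⟨t, m, j, ht, hj, rfl⟩
    obtain ⟨I, hI, hT⟩ := exists_isAG_hilbFn_eq_orderTwoSeq (K := K) hn ht hj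
    refine ⟨⟨I, hI, congrFun hT⟩, ?_, ?_⟩
    · rw [orderTwoSeq_apply, if_pos (by omega)]
      omega
    · rw [orderTwoSeq_apply, if_pos (by omega)]
      omega

/-- the codimension three Gorenstein sequences of order two
(`T_1 = 3`, `T_2 ≤ 5`), besides those of Sperner number at most six, are exactly
`(1,3,4,…,s-1,s^k,s-1,…,3,1)`, `(1,3,5,6,…,s-1,s^k,s-1,…,3,1)` and
`(1,3,5,7,…,2t+1,2t+2,…,s^k,…,3,1)` with `s ≥ 7`, `k ≥ 1` (and `t ≥ 3`,
`s ≥ 2t+1`). -/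
theorem stmt5 (T : ℕ → ℕ) :
    ((∃ I : Ideal (MvPolynomial (Fin 3) K), IsAG I ∧ ∀ i, hilbFn I i = T i) ∧
        T 1 = 3 ∧ T 2 ≤ 5 ∧ ¬(∀ i, T i ≤ 6)) ↔
    ∃ s, 7 ≤ s ∧ ∃ k, 1 ≤ k ∧
      ((∀ i, T i = famA s k i) ∨ (∀ i, T i = famB s k i) ∨
       ∃ t, 3 ≤ t ∧ 2 * t + 1 ≤ s ∧ ∀ i, T i = famC t s k i) := by
  rw [exists_fam_iff_exists_orderTwoSeq, ← stmt5_general (K := K) le_rfl]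
  simp only [and_assoc]
end
end

section
/- Let A = k[x,y,z]/I be an Artinian Gorenstein algebra of socle degree j with Hilbert function beginning (1,3,4,…) and with T(A)_3 = 5, so T(A) = (1,3,4,5,…,s−1,s^k,s−1,…,4,3,1). Then, up to a linear change of coordinates, I_2 = ⟨xy, xz⟩ or I_2 = ⟨x^2, xy⟩; in either case the two quadrics in I_2 share a common linear factor, and B = k[x,y,z]/(I : x) has constant Hilbert function T(B) = (1,1,…,1) (in degrees 0 through j−1). -/
/- Common background: standard graded Artinian (Gorenstein) quotients of a
polynomial ring, their graded pieces, Hilbert function, socle degree,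
Lefschetz-type conditions, and Macaulay contraction duality. -/

noncomputable section
open MvPolynomial
open scoped Classical

variable {K : Type*} [Field K] {n : ℕ}

/-! Two independent quadrics `p`, `q` span `I_2`, and the `2 · 3 = 6` products of a variable with
one of them lie in `I_3`, whose dimension is at most `10 - 5 = 5`. So there is a linear syzygy
`l p = m q`, and unique factorization turns it into `p = x m`, `q = x l` for a linear form `x`.
Hence `I : x` contains the independent linear forms `l` and `m`, and `B = R/(I : x)` is generated
by a single linear form, which bounds its Hilbert function by `1`. Since the socle of `A` is
one-dimensional, every nonzero form of `A` has a nonzero multiple in degree `j`; applied to `x`,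
this says that `B` is nonzero exactly in degrees `0` through `j - 1`. -/

theorem exists_pair_linearIndependent_span_eq {V : Type*} [AddCommGroup V] [Module K V]
    {W : Submodule K V} (h : Module.finrank K W = 2) :
    ∃ p q : V, LinearIndependent K ![p, q] ∧ Submodule.span K {p, q} = W := by
  have := Module.finite_of_finrank_eq_succ h
  let b := Module.finBasisOfFinrankEq K W h
  have hb : ![(b 0 : V), (b 1 : V)] = W.subtype ∘ b := by
    ext i
    fin_cases i <;> rfl
  refine ⟨b 0, b 1, ?_, ?_⟩
  · rw [hb]
    exact b.linearIndependent.map' _ W.ker_subtype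
  · rw [← Matrix.range_cons_cons_empty, hb, Set.range_comp, ← Submodule.map_span, b.span_eq,
      Submodule.map_top, Submodule.range_subtype]

section Forms

variable {σ : Type*}

theorem finrank_homogeneousSubmodule {R : Type*} [CommSemiring R] [StrongRankCondition R]
    [Fintype σ] (d : ℕ) :
    Module.finrank R (homogeneousSubmodule σ R d) = (Fintype.card σ).multichoose d := by
  let e : Sym σ d ≃ {e : σ →₀ ℕ | e.degree = d} :=
    (Sym.equivNatSumOfFintype σ d).trans
      (Finsupp.equivFunOnFinite.symm.subtypeEquiv fun P => by simp [Finsupp.degree_eq_sum])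
  have : Fintype {e : σ →₀ ℕ | e.degree = d} := Fintype.ofEquiv _ e
  rw [homogeneousSubmodule_eq_finsupp_supported,
    (AddMonoidAlgebra.supportedEquivFinsupp _).finrank_eq, Module.finrank_finsupp_self,
    ← Fintype.card_congr e, Sym.card_sym_eq_multichoose]

theorem irreducible_of_isHomogeneous_one {p : MvPolynomial σ K} (hp : p.IsHomogeneous 1)
    (h0 : p ≠ 0) : Irreducible p := by
  refine irreducible_of_totalDegree_eq_one (hp.totalDegree h0) fun c hc => ?_
  obtain ⟨d, hd⟩ := ne_zero_iff.mp h0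
  exact isUnit_of_dvd_unit (hc d) (isUnit_iff_ne_zero.mpr hd)

theorem exists_isHomogeneous_mul_eq_of_dvd {R : Type*} [CommSemiring R] {p q : MvPolynomial σ R}
    {a b : ℕ} (hp : p.IsHomogeneous a) (hq : q.IsHomogeneous (a + b)) (h : p ∣ q) :
    ∃ r : MvPolynomial σ R, r.IsHomogeneous b ∧ q = p * r := by
  obtain ⟨r, rfl⟩ := h
  let := gradedAlgebra (σ := σ) (R := R)
  refine ⟨homogeneousComponent b r, homogeneousComponent_isHomogeneous .., ?_⟩
  have h := DirectSum.coe_decompose_mul_add_of_left_mem (homogeneousSubmodule σ R)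
    (j := b) (b := r) hp
  rw [DirectSum.decompose_of_mem_same _ hq] at h
  rwa [← decomposition.decompose'_apply]

theorem exists_common_factor_of_linear_syzygy {p q l m : MvPolynomial σ K} {d : ℕ}
    (hq : q.IsHomogeneous (d + 1)) (hpq : LinearIndependent K ![p, q])
    (hl : l.IsHomogeneous 1) (hm : m.IsHomogeneous 1) (hl0 : l ≠ 0) (h : l * p = m * q) :
    ∃ x : MvPolynomial σ K, x.IsHomogeneous d ∧ p = x * m ∧ q = x * l := by
  rcases (irreducible_of_isHomogeneous_one hl hl0).prime.dvd_or_dvd ⟨p, h.symm⟩ with hlm | hlq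
  · obtain ⟨r, hr, rfl⟩ := exists_isHomogeneous_mul_eq_of_dvd (b := 0) hl hm hlm
    obtain ⟨c, rfl⟩ : ∃ c, r = C c :=
      ⟨_, totalDegree_eq_zero_iff_eq_C.mp ((totalDegree_zero_iff_isHomogeneous σ).mpr hr)⟩
    have hp : p = c • q := by
      rw [smul_eq_C_mul]
      exact mul_left_cancel₀ hl0 (by rw [h, mul_assoc])
    have hdep := LinearIndependent.pair_iff.mp hpq 1 (-c) (by rw [hp]; module)
    exact absurd hdep.1 one_ne_zero
  · obtain ⟨x, hx, rfl⟩ := exists_isHomogeneous_mul_eq_of_dvd hl (by rwa [add_comm]) hlq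
    exact ⟨x, hx, mul_left_cancel₀ hl0 (by rw [h]; ring), mul_comm l x⟩

end Forms

section HilbertFunction

/-- The degree-`i` component `I_i` of an ideal `I`, encoded as the space of forms of degree `i`
lying in `I`, so that it makes sense without assuming `I` homogeneous. -/
def idealPiece (I : Ideal (MvPolynomial (Fin n) K)) (i : ℕ) :
    Submodule K (MvPolynomial (Fin n) K) :=
  I.restrictScalars K ⊓ homogeneousSubmodule (Fin n) K i

variable {I : Ideal (MvPolynomial (Fin n) K)} {i : ℕ}

theorem mem_idealPiece {p : MvPolynomial (Fin n) K} :
    p ∈ idealPiece I i ↔ p ∈ I ∧ p.IsHomogeneous i :=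
  Iff.rfl

instance finite_homogeneousSubmodule (i : ℕ) :
    Module.Finite K (homogeneousSubmodule (Fin n) K i) :=
  Module.Finite.iff_fg.mpr (homogeneousSubmodule_fg ..)

instance finite_gradedPiece (I : Ideal (MvPolynomial (Fin n) K)) (i : ℕ) :
    Module.Finite K (gradedPiece I i) :=
  inferInstanceAs (Module.Finite K ((homogeneousSubmodule (Fin n) K i).map _))

instance finite_idealPiece (I : Ideal (MvPolynomial (Fin n) K)) (i : ℕ) :
    Module.Finite K (idealPiece I i) :=
  Submodule.finiteDimensional_of_le inf_le_right

theorem hilbFn_add_finrank_idealPiece (I : Ideal (MvPolynomial (Fin n) K)) (i : ℕ) :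
    hilbFn I i + Module.finrank K (idealPiece I i) = n.multichoose i := by
  set V := homogeneousSubmodule (Fin n) K i
  set f := (Ideal.Quotient.mkₐ K I).toLinearMap
  have hrank := LinearMap.finrank_range_add_finrank_ker (f.domRestrict V)
  have hker : (LinearMap.ker (f.domRestrict V)).map V.subtype = idealPiece I i := by
    ext p
    simp [f, V, mem_idealPiece, Ideal.Quotient.eq_zero_iff_mem, and_comm]
  rwa [LinearMap.range_domRestrict, finrank_homogeneousSubmodule, Fintype.card_fin,
    ← Submodule.finrank_map_subtype_eq, hker] at hrank

theorem hilbFn_add_card_le_multichoose {ι : Type*} [Fintype ι] {v : ι → MvPolynomial (Fin n) K}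
    (hv : LinearIndependent K v) (hvI : ∀ k, v k ∈ idealPiece I i) :
    hilbFn I i + Fintype.card ι ≤ n.multichoose i := by
  rw [← hilbFn_add_finrank_idealPiece I i, ← finrank_span_eq_card hv]
  exact Nat.add_le_add_left
    (Submodule.finrank_mono (Submodule.span_le.mpr (Set.range_subset_iff.mpr hvI))) _

theorem hilbFn_eq_zero_iff :
    hilbFn I i = 0 ↔ ∀ p : MvPolynomial (Fin n) K, p.IsHomogeneous i → p ∈ I := by
  rw [hilbFn, Submodule.finrank_eq_zero, gradedPiece, ← le_bot_iff, Submodule.map_le_iff_le_comap]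
  simp [SetLike.le_def, Ideal.Quotient.eq_zero_iff_mem]

theorem hilbFn_ne_zero_iff :
    hilbFn I i ≠ 0 ↔ ∃ p : MvPolynomial (Fin n) K, p.IsHomogeneous i ∧ p ∉ I := by
  simp [hilbFn_eq_zero_iff]

theorem gradedPiece_one_pow (I : Ideal (MvPolynomial (Fin n) K)) (i : ℕ) :
    gradedPiece I 1 ^ i = gradedPiece I i := by
  rw [gradedPiece, gradedPiece, ← homogeneousSubmodule_one_pow K i, Submodule.map_pow]

theorem gradedPiece_add (I : Ideal (MvPolynomial (Fin n) K)) (i k : ℕ) :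
    gradedPiece I (i + k) = gradedPiece I i * gradedPiece I k := by
  rw [← gradedPiece_one_pow I (i + k), ← gradedPiece_one_pow I i, ← gradedPiece_one_pow I k]
  exact pow_add (gradedPiece I 1) i k

theorem hilbFn_le_one_of_hilbFn_one_le_one (h : hilbFn I 1 ≤ 1) (i : ℕ) : hilbFn I i ≤ 1 := by
  obtain ⟨t, ht⟩ := (Submodule.finrank_le_one_iff_isPrincipal _).mp h
  rw [hilbFn, ← gradedPiece_one_pow, ht, Submodule.span_pow, Set.singleton_pow]
  exact (finrank_span_le_card _).trans (by simp)

theorem hilbFn_eq_zero_of_le {k : ℕ} (hik : i ≤ k) (h : hilbFn I i = 0) : hilbFn I k = 0 := by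
  obtain ⟨e, rfl⟩ := Nat.exists_eq_add_of_le hik
  rw [hilbFn, Submodule.finrank_eq_zero] at h ⊢
  rw [gradedPiece_add, h, Submodule.bot_mul]

theorem IsHomogIdeal.linearIndependent_mk (hI : IsHomogIdeal I) {p : ℕ → MvPolynomial (Fin n) K}
    (hp : ∀ i, (p i).IsHomogeneous i) (hpI : ∀ i, p i ∉ I) :
    LinearIndependent K fun i => Ideal.Quotient.mkₐ K I (p i) := by
  rw [linearIndependent_iff']
  intro s g hg i hi
  have hmem : ∑ k ∈ s, g k • p k ∈ I := by
    rw [← Ideal.Quotient.eq_zero_iff_mem, ← Ideal.Quotient.mkₐ_eq_mk K, map_sum]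
    simpa only [map_smul] using hg
  have hcomp : homogeneousComponent i (∑ k ∈ s, g k • p k) = g i • p i := by
    simp only [map_sum, map_smul, homogeneousComponent_of_mem (hp _), smul_ite, smul_zero,
      Finset.sum_ite_eq, if_pos hi]
  by_contra hgi
  exact hpI i ((Submodule.smul_mem_iff (I.restrictScalars K) hgi).mp (hcomp ▸ hI _ hmem i))

theorem IsHomogIdeal.exists_hilbFn_eq_zero (hI : IsHomogIdeal I)
    [FiniteDimensional K (MvPolynomial (Fin n) K ⧸ I)] : ∃ i, hilbFn I i = 0 := by
  by_contra! h
  choose p hp hpI using fun i => hilbFn_ne_zero_iff.mp (h i)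
  exact not_finite_iff_infinite.mpr inferInstance (hI.linearIndependent_mk hp hpI).finite

theorem IsHomogIdeal.hilbFn_eq_zero_iff_socDeg_lt (hI : IsHomogIdeal I) (hne : I ≠ ⊤)
    [FiniteDimensional K (MvPolynomial (Fin n) K ⧸ I)] : hilbFn I i = 0 ↔ socDeg I < i := by
  obtain ⟨N, hN⟩ := hI.exists_hilbFn_eq_zero
  have hbdd : BddAbove {k | hilbFn I k ≠ 0} :=
    ⟨N, fun k hk => le_of_not_ge fun hNk => hk (hilbFn_eq_zero_of_le hNk hN)⟩
  have hzero : hilbFn I 0 ≠ 0 :=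
    hilbFn_ne_zero_iff.mpr ⟨1, isHomogeneous_one .., (Ideal.ne_top_iff_one I).mp hne⟩
  have htop : hilbFn I (socDeg I) ≠ 0 := Nat.sSup_mem ⟨0, hzero⟩ hbdd
  refine ⟨fun h => lt_of_not_ge fun hle => htop (hilbFn_eq_zero_of_le hle h), fun h => ?_⟩
  by_contra hi
  exact h.not_ge (le_csSup hbdd hi)

end HilbertFunction

section Gorenstein

variable {I : Ideal (MvPolynomial (Fin n) K)} {d : ℕ}

theorem mk_mem_socleSub_iff {p : MvPolynomial (Fin n) K} :
    Ideal.Quotient.mk I p ∈ socleSub I ↔ ∀ v, X v * p ∈ I := by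
  simp [socleSub, ← map_mul, Ideal.Quotient.eq_zero_iff_mem]

theorem IsAG.hilbFn_eq_zero_iff_socDeg_lt (hI : IsAG I) : hilbFn I d = 0 ↔ socDeg I < d :=
  have := hI.2.2.1
  hI.1.hilbFn_eq_zero_iff_socDeg_lt hI.2.1

theorem IsAG.mem_of_socDeg_lt (hI : IsAG I) {p : MvPolynomial (Fin n) K} (hp : p.IsHomogeneous d)
    (hd : socDeg I < d) : p ∈ I :=
  hilbFn_eq_zero_iff.mp (hI.hilbFn_eq_zero_iff_socDeg_lt.mpr hd) p hp

theorem IsAG.exists_smul_sub_mem_of_socle (hI : IsAG I) {p g : MvPolynomial (Fin n) K}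
    (hpI : p ∉ I) (hp : ∀ v, X v * p ∈ I) (hg : ∀ v, X v * g ∈ I) : ∃ c : K, c • p - g ∈ I := by
  have hp0 : (⟨_, mk_mem_socleSub_iff.mpr hp⟩ : socleSub I) ≠ 0 := by
    simpa [Subtype.ext_iff, Ideal.Quotient.eq_zero_iff_mem] using hpI
  obtain ⟨c, hc⟩ := (finrank_eq_one_iff_of_nonzero' _ hp0).mp hI.2.2.2
    ⟨_, mk_mem_socleSub_iff.mpr hg⟩
  refine ⟨c, ?_⟩
  rw [← Ideal.Quotient.eq_zero_iff_mem, ← Ideal.Quotient.mkₐ_eq_mk K, map_sub, map_smul,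
    sub_eq_zero]
  exact congrArg Subtype.val hc

theorem IsAG.eq_socDeg_of_socle (hI : IsAG I) {p : MvPolynomial (Fin n) K} (hp : p.IsHomogeneous d)
    (hpI : p ∉ I) (hsocle : ∀ v, X v * p ∈ I) : d = socDeg I := by
  obtain ⟨g, hg, hgI⟩ := hilbFn_ne_zero_iff.mp
    (hI.hilbFn_eq_zero_iff_socDeg_lt.not.mpr (lt_irrefl (socDeg I)))
  obtain ⟨c, hc⟩ := hI.exists_smul_sub_mem_of_socle hpI hsocle fun v =>
    hI.mem_of_socDeg_lt ((isHomogeneous_X K v).mul hg) (by omega)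
  by_contra hd
  have hcomp : homogeneousComponent (socDeg I) (c • p - g) = -g := by
    rw [map_sub, map_smul, homogeneousComponent_of_mem hp, if_neg (Ne.symm hd),
      homogeneousComponent_eq_self hg, smul_zero, zero_sub]
  exact hgI (neg_mem_iff.mp (hcomp ▸ hI.1 _ hc (socDeg I)))

theorem IsAG.exists_mul_notMem (hI : IsAG I) {f : MvPolynomial (Fin n) K} (hf : f.IsHomogeneous d)
    (hfI : f ∉ I) {e : ℕ} (he : e + d ≤ socDeg I) :
    ∃ g : MvPolynomial (Fin n) K, g.IsHomogeneous e ∧ g * f ∉ I := by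
  induction e with
  | zero => exact ⟨1, isHomogeneous_one .., by rwa [one_mul]⟩
  | succ e ih =>
    obtain ⟨g, hg, hgf⟩ := ih (by omega)
    obtain ⟨v, hv⟩ : ∃ v, X v * (g * f) ∉ I := by
      by_contra! hsocle
      have := hI.eq_socDeg_of_socle (hg.mul hf) hgf hsocle
      omega
    exact ⟨X v * g, add_comm 1 e ▸ (isHomogeneous_X K v).mul hg, by rwa [mul_assoc]⟩

theorem IsAG.hilbFn_colon_eq_zero_iff (hI : IsAG I) {f : MvPolynomial (Fin n) K}
    (hf : f.IsHomogeneous d) (hfI : f ∉ I) {i : ℕ} :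
    hilbFn (Submodule.colon I (Ideal.span {f})) i = 0 ↔ socDeg I < i + d := by
  simp only [hilbFn_eq_zero_iff, Ideal.mem_colon_span_singleton]
  refine ⟨fun h => ?_, fun hi p hp => hI.mem_of_socDeg_lt (hp.mul hf) hi⟩
  by_contra! hi
  obtain ⟨g, hg, hgf⟩ := hI.exists_mul_notMem hf hfI hi
  exact hgf (h g hg)

end Gorenstein

section CommonFactor

variable {I : Ideal (MvPolynomial (Fin n) K)} {d : ℕ}

theorem exists_linear_syzygy {p q : MvPolynomial (Fin n) K} (hp : p ∈ idealPiece I d)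
    (hq : q ∈ idealPiece I d) (hq0 : q ≠ 0)
    (hrank : Module.finrank K (idealPiece I (d + 1)) < 2 * n) :
    ∃ l m : MvPolynomial (Fin n) K,
      l.IsHomogeneous 1 ∧ m.IsHomogeneous 1 ∧ l ≠ 0 ∧ l * p = m * q := by
  let V := homogeneousSubmodule (Fin n) K 1
  have hmul {r : MvPolynomial (Fin n) K} (hr : r ∈ idealPiece I d) (v : V) :
      v * r ∈ idealPiece I (d + 1) :=
    ⟨I.mul_mem_left _ hr.1, add_comm 1 d ▸ IsHomogeneous.mul v.2 hr.2⟩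
  let φ : V × V →ₗ[K] idealPiece I (d + 1) :=
    (((LinearMap.mulRight K p).domRestrict V).codRestrict _ (hmul hp)).coprod
      (-((LinearMap.mulRight K q).domRestrict V).codRestrict _ (hmul hq))
  have hker := φ.ker_ne_bot_of_finrank_lt (by
    rwa [Module.finrank_prod, finrank_homogeneousSubmodule, Fintype.card_fin,
      Nat.multichoose_one_right, ← two_mul])
  obtain ⟨⟨l, m⟩, hlm, hlm0⟩ := Submodule.exists_mem_ne_zero_of_ne_bot hker
  have hsyz : (l : MvPolynomial (Fin n) K) * p = m * q := by
    rw [← sub_eq_zero, sub_eq_add_neg]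
    exact congrArg Subtype.val hlm
  refine ⟨l, m, l.2, m.2, fun hl0 => hlm0 ?_, hsyz⟩
  rw [hl0, zero_mul, zero_eq_mul, or_iff_left hq0] at hsyz
  exact Prod.ext (Subtype.ext hl0) (Subtype.ext hsyz)

theorem exists_common_factor_of_finrank_idealPiece
    (h2 : Module.finrank K (idealPiece I (d + 1)) = 2)
    (hrank : Module.finrank K (idealPiece I (d + 2)) < 2 * n) :
    ∃ x l₁ l₂ : MvPolynomial (Fin n) K,
      x.IsHomogeneous d ∧ l₁.IsHomogeneous 1 ∧ l₂.IsHomogeneous 1 ∧ x ≠ 0 ∧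
      LinearIndependent K ![l₁, l₂] ∧
      idealPiece I (d + 1) = Submodule.span K {x * l₁, x * l₂} := by
  obtain ⟨p, q, hpq, hspan⟩ := exists_pair_linearIndependent_span_eq h2
  have hp : p ∈ idealPiece I (d + 1) := hspan ▸ Submodule.subset_span (by simp)
  have hq : q ∈ idealPiece I (d + 1) := hspan ▸ Submodule.subset_span (by simp)
  have hq0 : q ≠ 0 := hpq.ne_zero 1
  obtain ⟨l, m, hl, hm, hl0, hsyz⟩ := exists_linear_syzygy hp hq hq0 hrank
  obtain ⟨x, hx, rfl, rfl⟩ := exists_common_factor_of_linear_syzygy hq.2 hpq hl hm hl0 hsyz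
  have hml : LinearIndependent K ![m, l] :=
    LinearIndependent.pair_iff.mpr fun s t hst => LinearIndependent.pair_iff.mp hpq s t (by
      rw [← mul_smul_comm, ← mul_smul_comm, ← mul_add, hst, mul_zero])
  exact ⟨x, m, l, hx, hm, hl, left_ne_zero_of_mul hq0, hml, hspan.symm⟩

theorem hilbFn_colon_one_add_two_le {x l₁ l₂ : MvPolynomial (Fin n) K} (h₁ : l₁.IsHomogeneous 1)
    (h₂ : l₂.IsHomogeneous 1) (hli : LinearIndependent K ![l₁, l₂]) (hx₁ : x * l₁ ∈ I)
    (hx₂ : x * l₂ ∈ I) : hilbFn (Submodule.colon I (Ideal.span {x})) 1 + 2 ≤ n := by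
  have hmem : ∀ k, ![l₁, l₂] k ∈ idealPiece (Submodule.colon I (Ideal.span {x})) 1 :=
    Fin.forall_fin_two.mpr
      ⟨⟨Ideal.mem_colon_span_singleton.mpr (mul_comm x l₁ ▸ hx₁), h₁⟩,
        ⟨Ideal.mem_colon_span_singleton.mpr (mul_comm x l₂ ▸ hx₂), h₂⟩⟩
  simpa using hilbFn_add_card_le_multichoose hli hmem

end CommonFactor

theorem stmt11_general (I : Ideal (MvPolynomial (Fin 3) K)) (j : ℕ)
    (hAG : IsAG I) (hsoc : socDeg I = j)
    (h1 : hilbFn I 1 = 3) (h2 : hilbFn I 2 = 4) (h3 : 5 ≤ hilbFn I 3) :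
    ∃ x l₁ l₂ : MvPolynomial (Fin 3) K,
      x.IsHomogeneous 1 ∧ l₁.IsHomogeneous 1 ∧ l₂.IsHomogeneous 1 ∧
      LinearIndependent K ![l₁, l₂] ∧
      Submodule.restrictScalars K I ⊓ homogeneousSubmodule (Fin 3) K 2 =
        Submodule.span K {x * l₁, x * l₂} ∧
      (∀ i, i ≤ j - 1 → hilbFn (Submodule.colon I (Ideal.span {x})) i = 1) ∧
      (∀ i, j - 1 < i → hilbFn (Submodule.colon I (Ideal.span {x})) i = 0) := by
  subst hsoc
  have rank1 : hilbFn I 1 + Module.finrank K (idealPiece I 1) = 3 :=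
    (hilbFn_add_finrank_idealPiece I 1).trans (Nat.multichoose_eq 3 1)
  have rank2 : hilbFn I 2 + Module.finrank K (idealPiece I 2) = 6 :=
    (hilbFn_add_finrank_idealPiece I 2).trans (Nat.multichoose_eq 3 2)
  have rank3 : hilbFn I 3 + Module.finrank K (idealPiece I 3) = 10 :=
    (hilbFn_add_finrank_idealPiece I 3).trans (Nat.multichoose_eq 3 3)
  have hdim2 : Module.finrank K (idealPiece I 2) = 2 := by omega
  have hdim3 : Module.finrank K (idealPiece I 3) < 2 * 3 := by omega
  obtain ⟨x, l₁, l₂, hx, hl₁, hl₂, hx0, hli, hspan⟩ :=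
    exists_common_factor_of_finrank_idealPiece hdim2 hdim3
  have hI1 : idealPiece I 1 = ⊥ := Submodule.finrank_eq_zero.mp (by omega)
  have hxI : x ∉ I := fun h => hx0 ((Submodule.mem_bot K).mp (hI1 ▸ ⟨h, hx⟩))
  have hxl₁ : x * l₁ ∈ idealPiece I 2 := hspan ▸ Submodule.subset_span (by simp)
  have hxl₂ : x * l₂ ∈ idealPiece I 2 := hspan ▸ Submodule.subset_span (by simp)
  have hB1 := hilbFn_colon_one_add_two_le hl₁ hl₂ hli hxl₁.1 hxl₂.1
  have hB := hilbFn_le_one_of_hilbFn_one_le_one (Nat.le_of_add_le_add_right hB1)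
  have hBzero (i : ℕ) := hAG.hilbFn_colon_eq_zero_iff hx hxI (i := i)
  have hj := hAG.hilbFn_eq_zero_iff_socDeg_lt (d := 1)
  refine ⟨x, l₁, l₂, hx, hl₁, hl₂, hli, hspan, fun i hi => ?_, fun i hi => ?_⟩
  · exact le_antisymm (hB i) (Nat.one_le_iff_ne_zero.mpr ((hBzero i).not.mpr (by omega)))
  · exact (hBzero i).mpr (by omega)

/-- if `A = k[x,y,z]/I` is Artinian Gorenstein of socle degree `j`
with Hilbert function beginning `(1,3,4,…)` and `T(A)_3 = 5`, then up to coordinates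
`I_2 = ⟨xy, xz⟩` or `⟨x², xy⟩`: i.e. `I_2` is spanned by two quadrics with a common
linear factor `x` (times two independent linear forms), and `B = k[x,y,z]/(I : x)`
has constant Hilbert function `(1,1,…,1)` in degrees `0` through `j - 1`. -/
theorem stmt11 (hK : Infinite K) (I : Ideal (MvPolynomial (Fin 3) K)) (j : ℕ)
    (hAG : IsAG I) (hsoc : socDeg I = j)
    (h1 : hilbFn I 1 = 3) (h2 : hilbFn I 2 = 4) (h3 : hilbFn I 3 = 5) :
    ∃ x l₁ l₂ : MvPolynomial (Fin 3) K,
      x.IsHomogeneous 1 ∧ l₁.IsHomogeneous 1 ∧ l₂.IsHomogeneous 1 ∧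
      LinearIndependent K ![l₁, l₂] ∧
      Submodule.restrictScalars K I ⊓ homogeneousSubmodule (Fin 3) K 2 =
        Submodule.span K {x * l₁, x * l₂} ∧
      (∀ i, i ≤ j - 1 → hilbFn (Submodule.colon I (Ideal.span {x})) i = 1) ∧
      (∀ i, j - 1 < i → hilbFn (Submodule.colon I (Ideal.span {x})) i = 0) :=
  stmt11_general I j hAG hsoc h1 h2 h3.ge
end
end

section
/- Let k be a field of characteristic 3 and A = k[x,y,z]/(x^3, y^3, z^2), an Artinian Gorenstein algebra with Hilbert function (1,3,5,5,3,1) and socle degree 5. Then the multiplication map (x+y+z)^3: A_1 → A_4 is not bijective (not of full rank); consequently, since every general linear form is equivalent to x+y+z by a change of coordinates permuting the monomial structure, A fails to be almost strong Lefschetz. -/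
/- Common background: standard graded Artinian (Gorenstein) quotients of a
polynomial ring, their graded pieces, Hilbert function, socle degree,
Lefschetz-type conditions, and Macaulay contraction duality. -/

noncomputable section
open MvPolynomial
open scoped Classical

variable {K : Type*} [Field K] {n : ℕ}

/-- `A = R/I` is almost strong Lefschetz: for some linear form `ℓ`, the maps
`ℓ^{j-2i} : A_i → A_{j-i}` are bijective for all `0 ≤ i ≤ ⌊j/2⌋` with `i ≠ 1`. -/
def AlmostSL (I : Ideal (MvPolynomial (Fin n) K)) : Prop :=
  ∃ ℓ ∈ gradedPiece I 1, ∀ i, 2 * i ≤ socDeg I → i ≠ 1 →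
    PowMulBij I ℓ (socDeg I - 2 * i) i (socDeg I - i)

/-- The sequence whose values are read off a finite list (zero beyond). -/
def listSeq (L : List ℕ) : ℕ → ℕ := fun i => L.getD i 0

/-!
The quotient of `K[x₁, …, xₙ]` by `(x₁ ^ a₁, …, xₙ ^ aₙ)` has the monomials `x ^ d` with
`d v < a v` for all `v` as a basis, which gives its Hilbert function and its socle degree
`∑ (a v - 1)`. In characteristic `p` the Frobenius map is additive, so if every `a v` is at most
`q = p ^ e`, then the `q`-th power of every linear form is a combination of the `x v ^ q` and
vanishes in the quotient. Multiplication by such a power is not injective on any nonzero graded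
piece, and if `q` is at most the socle degree `j`, then already `ℓ ^ j : A_0 → A_j` is zero.
-/

open scoped Finset

lemma gradedPiece_restrictSupportIdeal {s : Set (Fin n →₀ ℕ)} (hs : IsUpperSet s) (i : ℕ) :
    gradedPiece (restrictSupportIdeal K s hs) i =
      (restrictSupport K ({d | d.degree = i} \ s)).map
        (Ideal.Quotient.mkₐ K (restrictSupportIdeal K s hs)).toLinearMap := by
  have hdeg : homogeneousSubmodule (Fin n) K i = restrictSupport K {d | d.degree = i} :=
    homogeneousSubmodule_eq_finsupp_supported _ _ _
  rw [gradedPiece, hdeg]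
  refine le_antisymm ?_ (Submodule.map_mono (restrictSupport_mono K Set.sdiff_subset))
  rw [restrictSupport_eq_span, Submodule.map_span_le]
  rintro _ ⟨d, hd, rfl⟩
  by_cases hds : d ∈ s
  · have hmem : monomial d (1 : K) ∈ restrictSupportIdeal K s hs :=
      (monomial_mem_restrictSupport K).2 (.inl hds)
    have hzero : (Ideal.Quotient.mkₐ K (restrictSupportIdeal K s hs)).toLinearMap
        (monomial d 1) = 0 := Ideal.Quotient.eq_zero_iff_mem.2 hmem
    exact hzero ▸ Submodule.zero_mem _
  · exact Submodule.mem_map_of_mem ((monomial_mem_restrictSupport K).2 (.inl ⟨hd, hds⟩))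

lemma disjoint_restrictSupport_ker_mkₐ {σ R : Type*} [CommRing R] {s t : Set (σ →₀ ℕ)}
    (hs : IsUpperSet s) (hts : Disjoint t s) :
    Disjoint (restrictSupport R t)
      (LinearMap.ker (Ideal.Quotient.mkₐ R (restrictSupportIdeal R s hs)).toLinearMap) := by
  rw [Submodule.disjoint_def]
  intro f hft hfker
  have hfs : f ∈ restrictSupport R s := Ideal.Quotient.eq_zero_iff_mem.1 hfker
  rw [mem_restrictSupport_iff] at hft hfs
  rw [← support_eq_empty, ← Finset.coe_eq_empty]
  exact Set.subset_eq_empty (Set.subset_inter hft hfs) hts.inter_eq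

lemma hilbFn_restrictSupportIdeal {s : Set (Fin n →₀ ℕ)} (hs : IsUpperSet s) (i : ℕ) :
    hilbFn (restrictSupportIdeal K s hs) i = ({d | d.degree = i} \ s).ncard := by
  have hinj := LinearMap.injective_domRestrict_iff.2
    (disjoint_restrictSupport_ker_mkₐ (R := K) hs
      (Set.disjoint_sdiff_left (s := s) (t := {d | d.degree = i})))
  rw [hilbFn, gradedPiece_restrictSupportIdeal, ← LinearMap.range_domRestrict,
    LinearMap.finrank_range_of_inj hinj,
    Module.finrank_eq_nat_card_basis (basisRestrictSupport K _), Nat.card_coe_set_eq]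

/-- The ideal generated by the powers `X v ^ a v` of the variables; for finitely many variables and
`0 < a v`, the quotient by it is a monomial complete intersection. -/
def varPowIdeal {σ : Type*} (R : Type*) [CommSemiring R] (a : σ → ℕ) : Ideal (MvPolynomial σ R) :=
  Ideal.span (Set.range fun v => X v ^ a v)

lemma span_X_pow_eq_varPowIdeal (R : Type*) [CommSemiring R] (i j k : ℕ) :
    (Ideal.span {X 0 ^ i, X 1 ^ j, X 2 ^ k} : Ideal (MvPolynomial (Fin 3) R)) =
      varPowIdeal R ![i, j, k] := by
  rw [varPowIdeal]
  congr 1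
  ext f
  simp [Fin.exists_fin_succ, eq_comm]

lemma isUpperSet_exists_le_apply {σ : Type*} (a : σ → ℕ) :
    IsUpperSet {d : σ →₀ ℕ | ∃ v, a v ≤ d v} :=
  fun _ _ hde ⟨v, hv⟩ => ⟨v, hv.trans (hde v)⟩

lemma varPowIdeal_eq_restrictSupportIdeal {σ R : Type*} [CommSemiring R] (a : σ → ℕ) :
    varPowIdeal R a = restrictSupportIdeal R _ (isUpperSet_exists_le_apply a) := by
  have hgen : Set.range (fun v => X v ^ a v) =
      (fun d => monomial d (1 : R)) '' Set.range fun v => Finsupp.single v (a v) := by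
    simp only [X_pow_eq_monomial, ← Set.range_comp, Function.comp_def]
  ext f
  rw [varPowIdeal, hgen, mem_ideal_span_monomial_image]
  simp only [Set.exists_range_iff, Finsupp.single_le_iff]
  rfl

lemma hilbFn_varPowIdeal (a : Fin n → ℕ) (i : ℕ) :
    hilbFn (varPowIdeal K a) i =
      #{d ∈ Fintype.piFinset fun v => Finset.range (a v) | ∑ v, d v = i} := by
  rw [varPowIdeal_eq_restrictSupportIdeal, hilbFn_restrictSupportIdeal,
    ← Set.ncard_image_of_injective _ DFunLike.coe_injective, ← Set.ncard_coe_finset]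
  congr 1
  ext d
  obtain ⟨d, rfl⟩ : ∃ d' : Fin n →₀ ℕ, ⇑d' = d := Finsupp.equivFunOnFinite.surjective d
  rw [DFunLike.coe_injective.mem_set_image]
  simp [Finsupp.degree_eq_sum, and_comm]

lemma filter_piFinset_range_sum_eq_nonempty_iff {ι : Type*} [Fintype ι] [DecidableEq ι]
    {a : ι → ℕ} (ha : ∀ v, 0 < a v) {i : ℕ} :
    {d ∈ Fintype.piFinset fun v => Finset.range (a v) | ∑ v, d v = i}.Nonempty ↔
      i ≤ ∑ v, (a v - 1) := by
  simp only [Finset.Nonempty, Finset.mem_filter, Fintype.mem_piFinset, Finset.mem_range]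
  constructor
  · rintro ⟨d, hda, rfl⟩
    exact Finset.sum_le_sum fun v _ => Nat.le_sub_one_of_lt (hda v)
  · intro hi
    obtain ⟨d, hda, hdi⟩ := Finsupp.exists_le_degree_eq
      (Finsupp.equivFunOnFinite.symm fun v => a v - 1) i (by simpa [Finsupp.degree_eq_sum] using hi)
    exact ⟨d, fun v => Nat.lt_of_le_sub_one (ha v) (hda v), by rw [← hdi, Finsupp.degree_eq_sum]⟩

lemma card_filter_piFinset_range_three_three_two (i : ℕ) :
    #{d ∈ Fintype.piFinset fun v => Finset.range (![3, 3, 2] v) | ∑ v, d v = i} =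
      listSeq [1, 3, 5, 5, 3, 1] i := by
  by_cases hi : i ≤ 5
  · interval_cases i <;> decide
  · have hempty := mt (filter_piFinset_range_sum_eq_nonempty_iff (a := ![3, 3, 2]) (by decide)).1 hi
    rw [Finset.not_nonempty_iff_eq_empty.1 hempty, Finset.card_empty, listSeq,
      List.getD_eq_default _ _ (Nat.lt_of_not_le hi)]

lemma hilbFn_varPowIdeal_ne_zero_iff {a : Fin n → ℕ} (ha : ∀ v, 0 < a v) {i : ℕ} :
    hilbFn (varPowIdeal K a) i ≠ 0 ↔ i ≤ ∑ v, (a v - 1) := by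
  rw [hilbFn_varPowIdeal, Finset.card_ne_zero, filter_piFinset_range_sum_eq_nonempty_iff ha]

lemma socDeg_varPowIdeal {a : Fin n → ℕ} (ha : ∀ v, 0 < a v) :
    socDeg (varPowIdeal K a) = ∑ v, (a v - 1) := by
  simp only [socDeg, hilbFn_varPowIdeal_ne_zero_iff ha]
  exact csSup_Iic

lemma pow_mem_varPowIdeal {σ R : Type*} [CommSemiring R] {p e : ℕ} [ExpChar R p] {a : σ → ℕ}
    (ha : ∀ v, a v ≤ p ^ e) {f : MvPolynomial σ R} (hf : f ∈ idealOfVars σ R) :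
    f ^ p ^ e ∈ varPowIdeal R a := by
  suffices idealOfVars σ R ≤ (varPowIdeal R a).comap (iterateFrobenius (MvPolynomial σ R) p e) from
    this hf
  rw [Ideal.span_le]
  rintro _ ⟨v, rfl⟩
  have hv : (X v : MvPolynomial σ R) ^ a v ∈ varPowIdeal R a := Ideal.subset_span ⟨v, rfl⟩
  exact Ideal.pow_mem_of_pow_mem _ hv (ha v)

lemma pow_eq_zero_of_mem_gradedPiece_one {p e : ℕ} [ExpChar K p] {a : Fin n → ℕ}
    (ha : ∀ v, a v ≤ p ^ e) {ℓ : MvPolynomial (Fin n) K ⧸ varPowIdeal K a}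
    (hℓ : ℓ ∈ gradedPiece (varPowIdeal K a) 1) : ℓ ^ p ^ e = 0 := by
  obtain ⟨f, hf, rfl⟩ := hℓ
  have hf' : f ∈ idealOfVars (Fin n) K := by
    rw [homogeneousSubmodule_one_eq_span_X] at hf
    exact Submodule.span_le_restrictScalars K _ _ hf
  exact Ideal.Quotient.eq_zero_iff_mem.2 (pow_mem_varPowIdeal ha hf')

lemma not_powMulBij_of_pow_eq_zero {I : Ideal (MvPolynomial (Fin n) K)}
    {ℓ : MvPolynomial (Fin n) K ⧸ I} {d u v : ℕ} (hℓ : ℓ ^ d = 0) (hu : hilbFn I u ≠ 0) :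
    ¬ PowMulBij I ℓ d u v := by
  intro h
  have hbot : gradedPiece I u = ⊥ :=
    (Submodule.eq_bot_iff _).2 fun a ha => h.1 a ha (by rw [hℓ, zero_mul])
  exact hu (by rw [hilbFn, hbot, finrank_bot])

theorem stmt14_general {p e : ℕ} [ExpChar K p] {a : Fin n → ℕ} (hpos : ∀ v, 0 < a v)
    (hle : ∀ v, a v ≤ p ^ e) (hsum : p ^ e ≤ ∑ v, (a v - 1)) :
    (∀ i, hilbFn (varPowIdeal K a) i =
        #{d ∈ Fintype.piFinset fun v => Finset.range (a v) | ∑ v, d v = i}) ∧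
    (∀ ℓ ∈ gradedPiece (varPowIdeal K a) 1, ∀ u ≤ ∑ v, (a v - 1), ∀ w,
        ¬ PowMulBij (varPowIdeal K a) ℓ (p ^ e) u w) ∧
    ¬ AlmostSL (varPowIdeal K a) := by
  refine ⟨hilbFn_varPowIdeal a, fun ℓ hℓ u hu w => not_powMulBij_of_pow_eq_zero
    (pow_eq_zero_of_mem_gradedPiece_one hle hℓ) ((hilbFn_varPowIdeal_ne_zero_iff hpos).2 hu), ?_⟩
  rintro ⟨ℓ, hℓ, hbij⟩
  have hpow : ℓ ^ (socDeg (varPowIdeal K a) - 2 * 0) = 0 := by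
    rw [socDeg_varPowIdeal hpos]
    exact pow_eq_zero_of_le hsum (pow_eq_zero_of_mem_gradedPiece_one hle hℓ)
  exact not_powMulBij_of_pow_eq_zero hpow ((hilbFn_varPowIdeal_ne_zero_iff hpos).2 (Nat.zero_le _))
    (hbij 0 (Nat.zero_le _) zero_ne_one)

/-- over a field of characteristic 3, the Artinian Gorenstein algebra
`A = k[x,y,z]/(x³,y³,z²)`, of Hilbert function `(1,3,5,5,3,1)` and socle degree 5,
has `(x+y+z)³ : A_1 → A_4` not bijective; and (any general linear form being
equivalent to `x+y+z`) `A` fails to be almost strong Lefschetz. -/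
theorem stmt14 (hchar : ringChar K = 3) :
    (∀ i, hilbFn (Ideal.span {X 0 ^ 3, X 1 ^ 3, X 2 ^ 2} : Ideal (MvPolynomial (Fin 3) K)) i
        = listSeq [1, 3, 5, 5, 3, 1] i) ∧
    ¬ PowMulBij (Ideal.span {X 0 ^ 3, X 1 ^ 3, X 2 ^ 2} : Ideal (MvPolynomial (Fin 3) K))
        (Ideal.Quotient.mk _ (X 0 + X 1 + X 2)) 3 1 4 ∧
    ¬ AlmostSL (Ideal.span {X 0 ^ 3, X 1 ^ 3, X 2 ^ 2} : Ideal (MvPolynomial (Fin 3) K)) := by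
  have : CharP K 3 := ringChar.of_eq hchar
  have : ExpChar K 3 := .prime Nat.prime_three
  have hlin : (X 0 + X 1 + X 2 : MvPolynomial (Fin 3) K).IsHomogeneous 1 :=
    ((isHomogeneous_X K 0).add (isHomogeneous_X K 1)).add (isHomogeneous_X K 2)
  obtain ⟨hhilb, hpow, hasl⟩ := stmt14_general (K := K) (p := 3) (e := 1) (a := ![3, 3, 2])
    (by decide) (by decide) (by decide)
  rw [span_X_pow_eq_varPowIdeal]
  exact ⟨fun i => (hhilb i).trans (card_filter_piFinset_range_three_three_two i),
    hpow _ ⟨_, hlin, rfl⟩ 1 (by decide) 4, hasl⟩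
end
end
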